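/- (Brady–Watt) Let W be a finite Coxeter group equipped with the reflection order and let γ be a Coxeter element. Then the interval [1,γ] = {w ∈ W : w ≤ γ} is a lattice: every pair of elements of [1,γ] has a greatest lower bound and a least upper bound within ([1,γ], ≤). -/

import Mathlib

/-!
Let `W` act on the space spanned by the simple roots through its geometric representation, which
preserves the Tits form `Q`. By Carter's lemma the reflection length of `w` is the dimension of its
moved space `im (1 - w)`, and below a Coxeter element `γ` the reflection order is the inclusion of
moved spaces. The non-symmetric Euler form `E x y = Q ((1 - γ)⁻¹ x) y` detects this order:
splitting off from `w` the reflection in a root `x` of its moved space cuts this space down to the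
vectors `y` with `E x y = 0`. So a sequence of roots with `E a b = 0` for `a` before `b` spans the
moved space of an element below `γ`.

Following every positive root backwards along its `γ`-orbit until it becomes negative orders the
positive roots so that `E x y ≥ 0 ≥ E y x` for `x` before `y`. This triangularity gives every
nonnegative combination of positive roots of the moved space of `w` a unique expression as a
positive combination of such a sequence of roots of this space. A combination of roots common to
the moved spaces of `u` and `w` therefore has the same expression for both, and the roots in the
expression of a generic one span the moved space of the meet of `u` and `w`. The join of two
elements is a common upper bound of minimal length.
-/

variable {B : Type*} {W : Type*} [Group W] {M : CoxeterMatrix B}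

/-- The reflection length of `w`: the least `k` such that `w` is a product of `k`
reflections (conjugates of simple reflections). -/
noncomputable def rlen (cs : CoxeterSystem M W) (w : W) : ℕ :=
  sInf {k | ∃ l : List W, (∀ t ∈ l, cs.IsReflection t) ∧ l.length = k ∧ l.prod = w}

/-- The reflection (absolute) order on `W`: `u ≤ w` iff `ℓ(w) = ℓ(u) + ℓ(u⁻¹w)`. -/
def rle (cs : CoxeterSystem M W) (u w : W) : Prop :=
  rlen cs w = rlen cs u + rlen cs (u⁻¹ * w)

/-- A Coxeter element: a conjugate of a product of all the simple reflections,
each occurring exactly once, in some order. -/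
def IsCoxeterElement [Fintype B] (cs : CoxeterSystem M W) (γ : W) : Prop :=
  ∃ (v : W) (l : List B), l.Nodup ∧ (∀ i : B, i ∈ l) ∧ γ = v * cs.wordProd l * v⁻¹

/-- `p` is a least upper bound of the set `s` within the interval `[1,γ]`
under the reflection order. -/
def IsIntervalLUB (cs : CoxeterSystem M W) (γ : W) (s : Set W) (p : W) : Prop :=
  rle cs p γ ∧ (∀ x ∈ s, rle cs x p) ∧
    ∀ r, rle cs r γ → (∀ x ∈ s, rle cs x r) → rle cs p r

/-- `p` is a greatest lower bound of the set `s` within the interval `[1,γ]`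
under the reflection order. -/
def IsIntervalGLB (cs : CoxeterSystem M W) (γ : W) (s : Set W) (p : W) : Prop :=
  rle cs p γ ∧ (∀ x ∈ s, rle cs p x) ∧
    ∀ r, rle cs r γ → (∀ x ∈ s, rle cs r x) → rle cs r p

namespace BradyWatt

/-! ### Reflection length and the reflection order -/

section ReflectionLength

variable (cs : CoxeterSystem M W)

lemma rlen_prod_le_length {l : List W} (hl : ∀ t ∈ l, cs.IsReflection t) :
    rlen cs l.prod ≤ l.length :=
  Nat.sInf_le ⟨l, hl, rfl, rfl⟩

lemma exists_reflections_prod_eq (w : W) :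
    ∃ l : List W, (∀ t ∈ l, cs.IsReflection t) ∧ l.length = rlen cs w ∧ l.prod = w := by
  suffices h : {k | ∃ l : List W, (∀ t ∈ l, cs.IsReflection t) ∧ l.length = k ∧
      l.prod = w}.Nonempty from Nat.sInf_mem h
  obtain ⟨ω, rfl⟩ := cs.wordProd_surjective w
  refine ⟨_, ω.map cs.simple, ?_, rfl, rfl⟩
  simp only [List.mem_map]
  rintro _ ⟨i, -, rfl⟩
  exact cs.isReflection_simple i

@[simp]
lemma rlen_one : rlen cs 1 = 0 := by
  simpa using rlen_prod_le_length cs (l := []) (by simp)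

lemma rlen_eq_zero_iff {w : W} : rlen cs w = 0 ↔ w = 1 := by
  refine ⟨fun h => ?_, fun h => h ▸ rlen_one cs⟩
  obtain ⟨l, -, hlen, rfl⟩ := exists_reflections_prod_eq cs w
  rw [h, List.length_eq_zero_iff] at hlen
  simp [hlen]

lemma rlen_mul_le (u v : W) : rlen cs (u * v) ≤ rlen cs u + rlen cs v := by
  obtain ⟨l, hl, hl', rfl⟩ := exists_reflections_prod_eq cs u
  obtain ⟨m, hm, hm', rfl⟩ := exists_reflections_prod_eq cs v
  rw [← hl', ← hm', ← List.prod_append, ← List.length_append]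
  exact rlen_prod_le_length cs fun t ht => (List.mem_append.1 ht).elim (hl t) (hm t)

lemma rlen_conj_le (v w : W) : rlen cs (v * w * v⁻¹) ≤ rlen cs w := by
  obtain ⟨l, hl, hl', rfl⟩ := exists_reflections_prod_eq cs w
  have hmap : v * l.prod * v⁻¹ = (l.map (MulAut.conj v)).prod := by
    rw [← map_list_prod, MulAut.conj_apply]
  rw [hmap, ← hl', ← l.length_map (MulAut.conj v)]
  refine rlen_prod_le_length cs fun t ht => ?_
  obtain ⟨s, hs, rfl⟩ := List.mem_map.1 ht
  exact (hl s hs).conj v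

@[simp]
lemma rlen_conj (v w : W) : rlen cs (v * w * v⁻¹) = rlen cs w := by
  refine le_antisymm (rlen_conj_le cs v w) ?_
  simpa [mul_assoc] using rlen_conj_le cs v⁻¹ (v * w * v⁻¹)

variable {cs}

lemma rlen_reflection_le_one {t : W} (ht : cs.IsReflection t) : rlen cs t ≤ 1 := by
  simpa using rlen_prod_le_length cs (l := [t]) (by simpa using ht)

lemma rlen_le_rlen_reflection_mul {t : W} (ht : cs.IsReflection t) (w : W) :
    rlen cs w ≤ rlen cs (t * w) + 1 := by
  have h := rlen_mul_le cs t (t * w)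
  rw [← mul_assoc, ht.mul_self, one_mul] at h
  linarith [rlen_reflection_le_one ht]

lemma exists_reflection_rlen_mul_add_one {w : W} (hw : w ≠ 1) :
    ∃ t, cs.IsReflection t ∧ rlen cs (t * w) + 1 = rlen cs w := by
  obtain ⟨l, hl, hlen, hprod⟩ := exists_reflections_prod_eq cs w
  cases l with
  | nil => exact absurd hprod.symm hw
  | cons t l =>
    rw [List.forall_mem_cons] at hl
    have htw : t * w = l.prod := by
      rw [← hprod, List.prod_cons, ← mul_assoc, hl.1.mul_self, one_mul]
    refine ⟨t, hl.1, le_antisymm ?_ (rlen_le_rlen_reflection_mul hl.1 w)⟩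
    rw [htw, ← hlen, List.length_cons]
    exact Nat.succ_le_succ (rlen_prod_le_length cs hl.2)

@[refl]
lemma rle_refl (w : W) : rle cs w w := by simp [rle]

lemma rle_of_rlen_add_le {u w : W} (h : rlen cs u + rlen cs (u⁻¹ * w) ≤ rlen cs w) :
    rle cs u w := by
  refine le_antisymm ?_ h
  simpa using rlen_mul_le cs u (u⁻¹ * w)

lemma rle_trans {u v w : W} (huv : rle cs u v) (hvw : rle cs v w) : rle cs u w := by
  have h := rlen_mul_le cs (u⁻¹ * v) (v⁻¹ * w)
  rw [mul_assoc, mul_inv_cancel_left] at h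
  refine rle_of_rlen_add_le ?_
  unfold rle at huv hvw
  omega

lemma eq_of_rle_of_rlen_le {u w : W} (h : rle cs u w) (hle : rlen cs w ≤ rlen cs u) : u = w := by
  unfold rle at h
  exact inv_mul_eq_one.1 ((rlen_eq_zero_iff cs).1 (by omega))

lemma rle_reflection_mul {t w : W} (ht : cs.IsReflection t) (h : rlen cs (t * w) + 1 = rlen cs w) :
    rle cs (t * w) w := by
  have hconj : (t * w)⁻¹ * w = w⁻¹ * t * w⁻¹⁻¹ := by simp [ht.inv, mul_assoc]
  refine rle_of_rlen_add_le ?_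
  rw [← h, hconj, rlen_conj]
  gcongr
  exact rlen_reflection_le_one ht

lemma exists_reflection_mul_rle {w γ : W} (hw : rle cs w γ) (hne : w ≠ γ) :
    ∃ t, cs.IsReflection t ∧ rlen cs (t * w) = rlen cs w + 1 ∧ rle cs (t * w) γ := by
  obtain ⟨t, ht, hlen⟩ := exists_reflection_rlen_mul_add_one
    (cs := cs) (w := w⁻¹ * γ) (fun h => hne (inv_mul_eq_one.1 h))
  have hmul : w * t * w⁻¹ * w = w * t := by group
  have hinv : (w * t)⁻¹ * γ = t * (w⁻¹ * γ) := by rw [mul_inv_rev, ht.inv, mul_assoc]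
  have hupper := rlen_mul_le cs w t
  have hlower := rlen_mul_le cs (w * t) ((w * t)⁻¹ * γ)
  have htlen := rlen_reflection_le_one ht
  rw [mul_inv_cancel_left, hinv] at hlower
  unfold rle at hw
  refine ⟨w * t * w⁻¹, ht.conj w, ?_, rle_of_rlen_add_le ?_⟩
  · rw [hmul]; omega
  · rw [hmul, hinv]; omega

lemma rle_conj_iff (v : W) {u w : W} :
    rle cs (v * u * v⁻¹) (v * w * v⁻¹) ↔ rle cs u w := by
  have h : (v * u * v⁻¹)⁻¹ * (v * w * v⁻¹) = v * (u⁻¹ * w) * v⁻¹ := by group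
  simp only [rle, h, rlen_conj]

lemma isIntervalGLB_conj {γ p : W} {s : Set W} (h : IsIntervalGLB cs γ s p) (v : W) :
    IsIntervalGLB cs (v * γ * v⁻¹) (MulAut.conj v '' s) (v * p * v⁻¹) := by
  obtain ⟨hp, hlower, hgreatest⟩ := h
  refine ⟨(rle_conj_iff v).2 hp, ?_, fun r hr hrs => ?_⟩
  · rintro _ ⟨x, hx, rfl⟩
    exact (rle_conj_iff v).2 (hlower x hx)
  · obtain ⟨r, rfl⟩ := (MulAut.conj v).surjective r
    exact (rle_conj_iff v).2 (hgreatest r ((rle_conj_iff v).1 hr)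
      fun x hx => (rle_conj_iff v).1 (hrs _ ⟨x, hx, rfl⟩))

/-- A common upper bound of minimal length is the join, because its meet with any other upper
bound is again an upper bound. -/
lemma exists_isIntervalLUB {γ : W}
    (hglb : ∀ u w, rle cs u γ → rle cs w γ → ∃ m, IsIntervalGLB cs γ {u, w} m)
    {s : Set W} (hs : ∀ x ∈ s, rle cs x γ) : ∃ j, IsIntervalLUB cs γ s j := by
  obtain ⟨j, ⟨hj, hsj⟩, hmin⟩ := exists_minimalFor_of_wellFoundedLT
    (fun j => rle cs j γ ∧ ∀ x ∈ s, rle cs x j) (rlen cs) ⟨γ, rle_refl γ, hs⟩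
  refine ⟨j, hj, hsj, fun r hr hsr => ?_⟩
  obtain ⟨m, hm, hlower, hgreatest⟩ := hglb j r hj hr
  have hsm : ∀ x ∈ s, rle cs x m := fun x hx =>
    hgreatest x (hs x hx) (by simpa using ⟨hsj x hx, hsr x hx⟩)
  have hmj : rle cs m j := hlower j (by simp)
  have hmr : rle cs m r := hlower r (by simp)
  have hle : rlen cs j ≤ rlen cs m := hmin ⟨hm, hsm⟩ (by unfold rle at hmj; omega)
  exact eq_of_rle_of_rlen_le hmj hle ▸ hmr

end ReflectionLength

/-! ### Moved spaces -/

section MovedSpace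

variable {k G V : Type*} [CommRing k] [Group G] [AddCommGroup V] [Module k V]
  (ρ : Representation k G V)

/-- The moved space of a group element `g` acting linearly: the range of `1 - g`. -/
def movedSpace (g : G) : Submodule k V := LinearMap.range (1 - ρ g)

variable {ρ} in
lemma mem_movedSpace {g : G} {x : V} : x ∈ movedSpace ρ g ↔ ∃ z, z - ρ g z = x := Iff.rfl

lemma sub_apply_mem_movedSpace (g : G) (z : V) : z - ρ g z ∈ movedSpace ρ g := ⟨z, rfl⟩

@[simp]
lemma movedSpace_one : movedSpace ρ 1 = ⊥ := by simp [movedSpace]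

lemma apply_mem_movedSpace_iff {g : G} {x : V} : ρ g x ∈ movedSpace ρ g ↔ x ∈ movedSpace ρ g := by
  constructor
  · rintro ⟨z, hz⟩
    refine ⟨ρ g⁻¹ z, ?_⟩
    simpa using congr(ρ g⁻¹ $hz)
  · rintro ⟨z, rfl⟩
    exact ⟨ρ g z, by simp⟩

lemma movedSpace_mul_le (g h : G) : movedSpace ρ (g * h) ≤ movedSpace ρ g ⊔ movedSpace ρ h := by
  rintro _ ⟨z, rfl⟩
  refine Submodule.mem_sup.2
    ⟨_, sub_apply_mem_movedSpace ρ g (ρ h z), _, sub_apply_mem_movedSpace ρ h z, ?_⟩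
  simp

end MovedSpace

/-! ### Orthogonal reflection representations -/

/-- An orthogonal reflection representation of a finite Coxeter group: a representation with an
invariant symmetric form and a finite system of unit roots, one pair of opposite roots for each
reflection, divided into positive and negative ones by the sign of a linear functional. -/
structure ReflectionRep (cs : CoxeterSystem M W) (V : Type*) [AddCommGroup V] [Module ℝ V] where
  act : Representation ℝ W V
  Q : LinearMap.BilinForm ℝ V
  Q_symm : ∀ x y, Q x y = Q y x
  Q_act : ∀ w x y, Q (act w x) (act w y) = Q x y
  roots : Set V
  finite_roots : roots.Finite
  neg_mem_roots : ∀ x ∈ roots, -x ∈ roots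
  act_mem_roots : ∀ w, ∀ x ∈ roots, act w x ∈ roots
  Q_self : ∀ x ∈ roots, Q x x = 1
  /-- The functional that is positive exactly on the positive roots. -/
  height : Module.Dual ℝ V
  height_ne_zero : ∀ x ∈ roots, height x ≠ 0
  /-- The reflection in a root (its values outside `roots` are irrelevant). -/
  refl : V → W
  isReflection_refl : ∀ x ∈ roots, cs.IsReflection (refl x)
  act_refl : ∀ x ∈ roots, ∀ v, act (refl x) v = v - (2 * Q v x) • x
  exists_refl_eq : ∀ t, cs.IsReflection t → ∃ x ∈ roots, refl x = t
  exists_mem_movedSpace : ∀ w ≠ 1, ∃ x ∈ roots, x ∈ movedSpace act w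

namespace ReflectionRep

variable {cs : CoxeterSystem M W} {V : Type*} [AddCommGroup V] [Module ℝ V] (G : ReflectionRep cs V)

/-- The moved space of a group element in a reflection representation. -/
abbrev mov (w : W) : Submodule ℝ V := movedSpace G.act w

/-- A root is positive when its height is positive. -/
def Pos (x : V) : Prop := x ∈ G.roots ∧ 0 < G.height x

variable {G} {w γ : W} {x y z : V}

lemma ne_zero_of_mem_roots (hx : x ∈ G.roots) : x ≠ 0 := by
  rintro rfl
  simpa using G.Q_self _ hx

lemma pos_neg_of_height_neg (hx : x ∈ G.roots) (h : G.height x < 0) : G.Pos (-x) :=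
  ⟨G.neg_mem_roots x hx, by simpa using h⟩

lemma pos_or_pos_neg (hx : x ∈ G.roots) : G.Pos x ∨ G.Pos (-x) :=
  (G.height_ne_zero x hx).lt_or_gt.symm.imp (⟨hx, ·⟩) (pos_neg_of_height_neg hx)

lemma finite_setOf_pos_and (p : V → Prop) : {x | G.Pos x ∧ p x}.Finite :=
  G.finite_roots.subset fun _ h => h.1.1

lemma refl_mul_cancel_left (hx : x ∈ G.roots) (w : W) : G.refl x * (G.refl x * w) = w := by
  rw [← mul_assoc, (G.isReflection_refl x hx).mul_self, one_mul]

lemma act_refl_mul (hx : x ∈ G.roots) (w : W) (v : V) :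
    G.act (G.refl x * w) v = G.act w v - (2 * G.Q (G.act w v) x) • x := by
  rw [map_mul, Module.End.mul_apply, G.act_refl x hx]

lemma sub_act_refl_mul (hx : x ∈ G.roots) (w : W) (z : V) :
    z - G.act (G.refl x * w) z = (z - G.act w z) + (2 * G.Q (G.act w z) x) • x := by
  rw [act_refl_mul hx]; abel

lemma mov_refl (hx : x ∈ G.roots) : G.mov (G.refl x) = ℝ ∙ x := by
  refine le_antisymm ?_ ((Submodule.span_singleton_le_iff_mem _ _).2 ?_)
  · rintro _ ⟨z, rfl⟩
    refine Submodule.mem_span_singleton.2 ⟨2 * G.Q z x, ?_⟩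
    simp [G.act_refl x hx]
  · refine ⟨(1 / 2 : ℝ) • x, ?_⟩
    simp [G.act_refl x hx, G.Q_self x hx]

lemma mov_refl_mul_le (hx : x ∈ G.roots) (w : W) : G.mov (G.refl x * w) ≤ ℝ ∙ x ⊔ G.mov w :=
  mov_refl hx ▸ movedSpace_mul_le G.act _ w

lemma mov_refl_mul_le_of_mem (hx : x ∈ G.roots) (hxw : x ∈ G.mov w) :
    G.mov (G.refl x * w) ≤ G.mov w :=
  (mov_refl_mul_le hx w).trans (sup_le ((Submodule.span_singleton_le_iff_mem _ _).2 hxw) le_rfl)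

lemma mov_prod_map_refl_le_span {l : List V} (hl : ∀ a ∈ l, a ∈ G.roots) :
    G.mov (l.map G.refl).prod ≤ Submodule.span ℝ {a | a ∈ l} := by
  induction l with
  | nil => simp [mov]
  | cons a l ih =>
    rw [List.forall_mem_cons] at hl
    rw [List.map_cons, List.prod_cons]
    refine (mov_refl_mul_le hl.1 _).trans (sup_le (Submodule.span_mono (by simp)) ?_)
    exact (ih hl.2).trans (Submodule.span_mono fun b hb => List.mem_cons_of_mem a hb)

lemma mov_eq_span_sup (hx : x ∈ G.roots) (hxw : x ∈ G.mov w) :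
    G.mov w = ℝ ∙ x ⊔ G.mov (G.refl x * w) := by
  refine le_antisymm ?_ (sup_le ((Submodule.span_singleton_le_iff_mem _ _).2 hxw)
    (mov_refl_mul_le_of_mem hx hxw))
  simpa only [refl_mul_cancel_left hx] using mov_refl_mul_le hx (G.refl x * w)

/-- The vectors `z` and `w z = z - x` have the same length. -/
lemma two_mul_Q_of_sub_act_eq (hx : x ∈ G.roots) (hz : z - G.act w z = x) : 2 * G.Q z x = 1 := by
  have hwz : G.act w z = z - x := by rw [← hz, sub_sub_cancel]
  have hlength := G.Q_act w z z
  simp only [hwz, map_sub, LinearMap.sub_apply, G.Q_symm x z, G.Q_self x hx] at hlength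
  linarith

lemma act_refl_mul_of_sub_act_eq (hx : x ∈ G.roots) (hz : z - G.act w z = x) :
    G.act (G.refl x * w) z = z := by
  have hwz : G.act w z = z - x := by rw [← hz, sub_sub_cancel]
  have hcoeff : 2 * G.Q (z - x) x = -1 := by
    simp only [map_sub, LinearMap.sub_apply, G.Q_self x hx]
    linarith [two_mul_Q_of_sub_act_eq hx hz]
  rw [act_refl_mul hx, hwz, hcoeff, neg_one_smul, sub_neg_eq_add, sub_add_cancel]

lemma Q_eq_zero_of_act_eq_of_mem_mov (hz : G.act w z = z) (hy : y ∈ G.mov w) : G.Q z y = 0 := by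
  obtain ⟨v, rfl⟩ := mem_movedSpace.1 hy
  rw [map_sub, ← G.Q_act w z v, hz, sub_self]

lemma notMem_mov_refl_mul (hx : x ∈ G.roots) (hxw : x ∈ G.mov w) :
    x ∉ G.mov (G.refl x * w) := by
  intro h
  obtain ⟨z, hz⟩ := mem_movedSpace.1 hxw
  have hzero := Q_eq_zero_of_act_eq_of_mem_mov (act_refl_mul_of_sub_act_eq hx hz) h
  linarith [two_mul_Q_of_sub_act_eq hx hz]

lemma exists_pos_mem_mov (hw : w ≠ 1) : ∃ x, G.Pos x ∧ x ∈ G.mov w := by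
  obtain ⟨x, hx, hxw⟩ := G.exists_mem_movedSpace w hw
  rcases pos_or_pos_neg hx with h | h
  exacts [⟨x, h, hxw⟩, ⟨-x, h, neg_mem hxw⟩]

section FiniteDimensional

variable [FiniteDimensional ℝ V]

open Module

lemma finrank_mov_prod_le {l : List W} (hl : ∀ t ∈ l, cs.IsReflection t) :
    finrank ℝ (G.mov l.prod) ≤ l.length := by
  induction l with
  | nil => rw [List.prod_nil, mov, movedSpace_one, finrank_bot]; exact le_rfl
  | cons t l ih =>
    rw [List.forall_mem_cons] at hl
    obtain ⟨x, hx, rfl⟩ := G.exists_refl_eq t hl.1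
    calc finrank ℝ (G.mov (G.refl x :: l).prod)
        ≤ finrank ℝ ↥(ℝ ∙ x ⊔ G.mov l.prod) := by
          rw [List.prod_cons]; exact Submodule.finrank_mono (mov_refl_mul_le hx l.prod)
      _ ≤ finrank ℝ (ℝ ∙ x) + finrank ℝ (G.mov l.prod) :=
          Submodule.finrank_add_le_finrank_add_finrank _ _
      _ ≤ 1 + l.length := add_le_add (finrank_span_singleton (ne_zero_of_mem_roots hx)).le (ih hl.2)
      _ = (G.refl x :: l).length := by rw [List.length_cons, add_comm]

lemma finrank_mov_refl_mul_lt (hx : x ∈ G.roots) (hxw : x ∈ G.mov w) :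
    finrank ℝ (G.mov (G.refl x * w)) < finrank ℝ (G.mov w) :=
  Submodule.finrank_lt_finrank_of_lt <|
    (mov_refl_mul_le_of_mem hx hxw).lt_of_not_ge fun h => notMem_mov_refl_mul hx hxw (h hxw)

/-- Carter's lemma. -/
theorem rlen_eq_finrank_mov (w : W) : rlen cs w = finrank ℝ (G.mov w) := by
  refine le_antisymm ?_ ?_
  · induction hn : finrank ℝ (G.mov w) using Nat.strong_induction_on generalizing w with
    | _ n ih =>
      by_cases hw : w = 1
      · simp [hw]
      obtain ⟨x, hx, hxw⟩ := G.exists_mem_movedSpace w hw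
      have hlt := finrank_mov_refl_mul_lt hx hxw
      have hle := ih _ (hn ▸ hlt) _ rfl
      have hrlen := rlen_le_rlen_reflection_mul (G.isReflection_refl x hx) w
      omega
  · obtain ⟨l, hl, hlen, rfl⟩ := exists_reflections_prod_eq cs w
    exact hlen ▸ finrank_mov_prod_le hl

lemma rlen_refl_mul (hx : x ∈ G.roots) (hxw : x ∈ G.mov w) :
    rlen cs (G.refl x * w) + 1 = rlen cs w := by
  have hlt := finrank_mov_refl_mul_lt hx hxw
  rw [← rlen_eq_finrank_mov, ← rlen_eq_finrank_mov] at hlt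
  exact le_antisymm hlt (rlen_le_rlen_reflection_mul (G.isReflection_refl x hx) w)

lemma rle_refl_mul (hw : rle cs w γ) (hx : x ∈ G.roots) (hxw : x ∈ G.mov w) :
    rle cs (G.refl x * w) γ :=
  rle_trans (rle_reflection_mul (G.isReflection_refl x hx) (rlen_refl_mul hx hxw)) hw

lemma mov_le_of_rle {u w : W} (h : rle cs u w) : G.mov u ≤ G.mov w := by
  have hle : G.mov w ≤ G.mov u ⊔ G.mov (u⁻¹ * w) := by
    simpa using movedSpace_mul_le G.act u (u⁻¹ * w)
  have heq : G.mov w = G.mov u ⊔ G.mov (u⁻¹ * w) := by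
    refine Submodule.eq_of_le_of_finrank_le hle
      ((Submodule.finrank_add_le_finrank_add_finrank _ _).trans_eq ?_)
    rw [← rlen_eq_finrank_mov, ← rlen_eq_finrank_mov, ← rlen_eq_finrank_mov, h]
  exact heq ▸ le_sup_left

lemma mov_eq_span_roots (w : W) : G.mov w = Submodule.span ℝ {x | x ∈ G.roots ∧ x ∈ G.mov w} := by
  refine le_antisymm ?_ (Submodule.span_le.2 fun x hx => hx.2)
  induction hn : rlen cs w using Nat.strong_induction_on generalizing w with
  | _ n ih =>
    by_cases hw : w = 1
    · simp [hw, mov]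
    obtain ⟨x, hx, hxw⟩ := G.exists_mem_movedSpace w hw
    have hrlen := rlen_refl_mul hx hxw
    rw [mov_eq_span_sup hx hxw]
    refine sup_le (Submodule.span_mono ?_) ((ih _ (by omega) _ rfl).trans (Submodule.span_mono ?_))
    · rintro y rfl
      exact ⟨hx, Submodule.mem_sup_left (Submodule.mem_span_singleton_self y)⟩
    · exact fun y hy => ⟨hy.1, Submodule.mem_sup_right hy.2⟩

lemma exists_eq_refl_mul_of_rle (hw : rle cs w γ) (hne : w ≠ γ) :
    ∃ x ∈ G.roots, ∃ v, rle cs v γ ∧ x ∈ G.mov v ∧ w = G.refl x * v := by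
  obtain ⟨t, ht, hlen, hle⟩ := exists_reflection_mul_rle hw hne
  obtain ⟨x, hx, rfl⟩ := G.exists_refl_eq t ht
  refine ⟨x, hx, _, hle, ?_, (refl_mul_cancel_left hx w).symm⟩
  have hcover : rle cs (G.refl x) (G.refl x * w) := by
    refine rle_of_rlen_add_le ?_
    rw [ht.inv, refl_mul_cancel_left hx, hlen, add_comm]
    gcongr
    exact rlen_reflection_le_one ht
  exact mov_le_of_rle hcover (mov_refl hx ▸ Submodule.mem_span_singleton_self x)

end FiniteDimensional

end ReflectionRep

/-! ### The Euler form of a Coxeter element -/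

/-- The Euler form of `γ` on a reflection representation in which `1 - γ` is invertible: the
non-symmetric bilinear form `E x y = Q ((1 - γ)⁻¹ x) y`. -/
structure EulerForm {cs : CoxeterSystem M W} {V : Type*} [AddCommGroup V] [Module ℝ V]
    (G : ReflectionRep cs V) (γ : W) where
  E : LinearMap.BilinForm ℝ V
  E_sub_act : ∀ z y, E (z - G.act γ z) y = G.Q z y
  mem_mov : ∀ x, x ∈ G.mov γ

namespace EulerForm

open ReflectionRep

variable {cs : CoxeterSystem M W} {V : Type*} [AddCommGroup V] [Module ℝ V]
  {G : ReflectionRep cs V} {γ w : W} {x y : V} (F : EulerForm G γ)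

lemma E_add_E (x y : V) : F.E x y + F.E y x = G.Q x y := by
  obtain ⟨z, rfl⟩ := mem_movedSpace.1 (F.mem_mov x)
  obtain ⟨u, rfl⟩ := mem_movedSpace.1 (F.mem_mov y)
  rw [F.E_sub_act, F.E_sub_act]
  simp only [map_sub, LinearMap.sub_apply]
  linarith [G.Q_act γ z u, G.Q_symm z u, G.Q_symm u (G.act γ z)]

lemma E_act_act_of_commute (h : Commute w γ) (x y : V) :
    F.E (G.act w x) (G.act w y) = F.E x y := by
  obtain ⟨z, rfl⟩ := mem_movedSpace.1 (F.mem_mov x)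
  rw [map_sub, ← Module.End.mul_apply, ← map_mul, h.eq, map_mul, Module.End.mul_apply, F.E_sub_act,
    F.E_sub_act, G.Q_act]

lemma E_self (hx : x ∈ G.roots) : F.E x x = 1 / 2 := by
  linarith [F.E_add_E x x, G.Q_self x hx]

lemma E_eq_zero_of_mem_mov_refl_mul
    (h : ∀ z, ∀ y ∈ G.mov w, F.E (z - G.act w z) y = G.Q z y)
    (hx : x ∈ G.roots) (hxw : x ∈ G.mov w) (hy : y ∈ G.mov (G.refl x * w)) : F.E x y = 0 := by
  obtain ⟨z, hz⟩ := mem_movedSpace.1 hxw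
  rw [← hz, h z y (mov_refl_mul_le_of_mem hx hxw hy)]
  exact Q_eq_zero_of_act_eq_of_mem_mov (act_refl_mul_of_sub_act_eq hx hz) hy

variable [FiniteDimensional ℝ V]

lemma E_sub_act_of_rle (hw : rle cs w γ) (z : V) (hy : y ∈ G.mov w) :
    F.E (z - G.act w z) y = G.Q z y := by
  induction hn : rlen cs γ - rlen cs w using Nat.strong_induction_on generalizing w z y with
  | _ n ih =>
    by_cases hne : w = γ
    · subst hne
      exact F.E_sub_act z y
    obtain ⟨x, hx, v, hv, hxv, rfl⟩ := G.exists_eq_refl_mul_of_rle hw hne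
    have hrlen := rlen_refl_mul hx hxv
    have hle : rlen cs v ≤ rlen cs γ := by unfold rle at hv; omega
    have hE : ∀ z, ∀ y ∈ G.mov v, F.E (z - G.act v z) y = G.Q z y :=
      fun z y hy => ih _ (by omega) hv z hy rfl
    rw [sub_act_refl_mul hx, map_add, map_smul, LinearMap.add_apply, LinearMap.smul_apply,
      F.E_eq_zero_of_mem_mov_refl_mul hE hx hxv hy, smul_zero, add_zero,
      hE z y (mov_refl_mul_le_of_mem hx hxv hy)]

lemma mem_mov_refl_mul_iff (hw : rle cs w γ) (hx : x ∈ G.roots) (hxw : x ∈ G.mov w) :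
    y ∈ G.mov (G.refl x * w) ↔ y ∈ G.mov w ∧ F.E x y = 0 := by
  have hzero : ∀ y ∈ G.mov (G.refl x * w), F.E x y = 0 := fun y =>
    F.E_eq_zero_of_mem_mov_refl_mul (fun z y hy => F.E_sub_act_of_rle hw z hy) hx hxw
  refine ⟨fun hy => ⟨mov_refl_mul_le_of_mem hx hxw hy, hzero y hy⟩, ?_⟩
  rintro ⟨⟨z, rfl⟩, hxz⟩
  have hmem := sub_apply_mem_movedSpace G.act (G.refl x * w) z
  have hcoeff := hzero _ hmem
  rw [sub_act_refl_mul hx] at hmem hcoeff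
  have hQ : 2 * G.Q (G.act w z) x = 0 := by
    simp only [map_add, map_smul, F.E_self hx, smul_eq_mul] at hcoeff
    linarith [show F.E x (z - G.act w z) = 0 from hxz]
  simpa [hQ] using hmem

/-- Serre duality. -/
lemma E_act (hw : rle cs w γ) (hx : x ∈ G.mov w) (hy : y ∈ G.mov w) :
    F.E (G.act w x) y = -F.E y x := by
  obtain ⟨z, rfl⟩ := mem_movedSpace.1 hx
  obtain ⟨u, rfl⟩ := mem_movedSpace.1 hy
  rw [map_sub (G.act w), F.E_sub_act_of_rle hw _ (sub_apply_mem_movedSpace _ w u),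
    F.E_sub_act_of_rle hw _ (sub_apply_mem_movedSpace _ w z)]
  simp only [map_sub]
  linarith [G.Q_act w z u, G.Q_symm z u, G.Q_symm u (G.act w z)]

lemma rle_of_mov_le (F : EulerForm G γ) {u w : W} (hu : rle cs u γ) (hw : rle cs w γ)
    (h : G.mov u ≤ G.mov w) : rle cs u w := by
  induction hn : rlen cs u using Nat.strong_induction_on generalizing u w with
  | _ n ih =>
    by_cases hu1 : u = 1
    · simp [hu1, rle]
    obtain ⟨x, hx, hxu⟩ := G.exists_mem_movedSpace u hu1
    have hulen := rlen_refl_mul hx hxu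
    have hwlen := rlen_refl_mul hx (h hxu)
    have hmov : G.mov (G.refl x * u) ≤ G.mov (G.refl x * w) := fun y hy => by
      rw [F.mem_mov_refl_mul_iff hu hx hxu] at hy
      exact (F.mem_mov_refl_mul_iff hw hx (h hxu)).2 ⟨h hy.1, hy.2⟩
    have hrle := ih _ (by omega) (rle_refl_mul hu hx hxu) (rle_refl_mul hw hx (h hxu)) hmov rfl
    have hquot : (G.refl x * u)⁻¹ * (G.refl x * w) = u⁻¹ * w := by group
    unfold rle at hrle ⊢
    rw [hquot] at hrle
    omega

lemma rlen_prod_map_refl_inv_mul (hw : rle cs w γ) {l : List V}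
    (hl : ∀ a ∈ l, a ∈ G.roots ∧ a ∈ G.mov w) (hE : l.Pairwise fun a b => F.E a b = 0) :
    rlen cs ((l.map G.refl).prod⁻¹ * w) + l.length = rlen cs w := by
  induction l generalizing w with
  | nil => simp
  | cons a l ih =>
    rw [List.pairwise_cons] at hE
    rw [List.forall_mem_cons] at hl
    obtain ⟨⟨ha, haw⟩, hl⟩ := hl
    have htail := ih (rle_refl_mul hw ha haw) (fun b hb => ⟨(hl b hb).1,
      (F.mem_mov_refl_mul_iff hw ha haw).2 ⟨(hl b hb).2, hE.1 b hb⟩⟩) hE.2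
    have hprod : ((a :: l).map G.refl).prod⁻¹ * w =
        (l.map G.refl).prod⁻¹ * (G.refl a * w) := by
      rw [List.map_cons, List.prod_cons, mul_inv_rev, (G.isReflection_refl a ha).inv, mul_assoc]
    rw [hprod, List.length_cons, ← add_assoc, htail, rlen_refl_mul ha haw]

lemma exists_mov_eq_span {l : List V} (hl : ∀ a ∈ l, a ∈ G.roots)
    (hE : l.Pairwise fun a b => F.E a b = 0) :
    ∃ m, rle cs m γ ∧ G.mov m = Submodule.span ℝ {a | a ∈ l} := by
  classical
  have hsplit := F.rlen_prod_map_refl_inv_mul (rle_refl γ) (fun a ha => ⟨hl a ha, F.mem_mov a⟩) hE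
  have hrlen : rlen cs (l.map G.refl).prod ≤ l.length := by
    simpa using rlen_prod_le_length cs (l := l.map G.refl)
      (List.forall_mem_map.2 fun a ha => G.isReflection_refl a (hl a ha))
  have htriangle := rlen_mul_le cs (l.map G.refl).prod ((l.map G.refl).prod⁻¹ * γ)
  rw [mul_inv_cancel_left] at htriangle
  refine ⟨(l.map G.refl).prod, rle_of_rlen_add_le (by omega), ?_⟩
  refine Submodule.eq_of_le_of_finrank_le (mov_prod_map_refl_le_span hl) ?_
  calc Module.finrank ℝ (Submodule.span ℝ {a | a ∈ l})
      ≤ l.toFinset.card := by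
        rw [← List.coe_toFinset]
        exact finrank_span_finset_le_card _
    _ ≤ rlen cs (l.map G.refl).prod := (List.toFinset_card_le l).trans (by omega)
    _ = Module.finrank ℝ (G.mov (l.map G.refl).prod) := rlen_eq_finrank_mov _

end EulerForm

/-! ### Dominant vectors and their decompositions -/

/-- An Euler form together with a total order of the positive roots, given by an injective `key`
into a linear order, in which `E x y ≥ 0 ≥ E y x` whenever `x` precedes `y`. -/
structure OrderedEulerForm {cs : CoxeterSystem M W} {V : Type*} [AddCommGroup V] [Module ℝ V]
    (G : ReflectionRep cs V) (γ : W) (K : Type*) [LinearOrder K] extends EulerForm G γ where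
  /-- The position of a positive root (its values at other vectors are irrelevant). -/
  key : V → K
  key_inj : ∀ x y, G.Pos x → G.Pos y → key x = key y → x = y
  E_nonneg_of_key_lt : ∀ x y, G.Pos x → G.Pos y → key x < key y → 0 ≤ E x y
  E_nonpos_of_key_lt : ∀ x y, G.Pos x → G.Pos y → key x < key y → E y x ≤ 0

namespace OrderedEulerForm

open ReflectionRep

variable {cs : CoxeterSystem M W} {V : Type*} [AddCommGroup V] [Module ℝ V]
  {G : ReflectionRep cs V} {γ w : W} {K : Type*} [LinearOrder K] {x y ρ σ : V}
  (F : OrderedEulerForm G γ K)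

lemma key_le_of_E_pos (hx : G.Pos x) (hy : G.Pos y) (h : 0 < F.E x y) : F.key x ≤ F.key y :=
  le_of_not_gt fun hlt => (F.E_nonpos_of_key_lt y x hy hx hlt).not_gt h

lemma key_lt_of_E_neg (hx : G.Pos x) (hy : G.Pos y) (h : F.E x y < 0) : F.key y < F.key x := by
  refine lt_of_le_of_ne (le_of_not_gt fun hlt => ?_) fun heq => ?_
  · exact (F.E_nonneg_of_key_lt x y hx hy hlt).not_gt h
  · obtain rfl := F.key_inj y x hy hx heq
    linarith [F.E_self hy.1]

lemma E_reflect_right (hρ : G.Pos ρ) (σ : V) (c : ℝ) : F.E ρ (σ - c • ρ) = F.E ρ σ - c / 2 := by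
  rw [map_sub, map_smul, F.E_self hρ.1, smul_eq_mul]
  ring

lemma act_refl_eq_sub_of_E_eq_zero (hρ : G.Pos ρ) (hσρ : F.E σ ρ = 0) :
    G.act (G.refl ρ) σ = σ - (2 * F.E ρ σ) • ρ := by
  rw [G.act_refl ρ hρ.1, ← F.E_add_E, hσρ, zero_add]

/-- The dominant vectors of the moved space of `w`: those pairing nonnegatively with the positive
roots of this space that `w` makes negative. -/
def Dominant (w : W) (x : V) : Prop :=
  x ∈ G.mov w ∧ ∀ ι, G.Pos ι → ι ∈ G.mov w → G.height (G.act w ι) < 0 → 0 ≤ F.E x ι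

variable {F} in
lemma Dominant.sum {ι : Type*} {s : Finset ι} {c : ι → ℝ} {y : ι → V}
    (hy : ∀ i ∈ s, F.Dominant w (y i)) (hc : ∀ i ∈ s, 0 ≤ c i) :
    F.Dominant w (∑ i ∈ s, c i • y i) := by
  refine ⟨sum_mem fun i hi => Submodule.smul_mem _ _ (hy i hi).1, fun κ hκ hκw hneg => ?_⟩
  rw [map_sum, LinearMap.sum_apply]
  refine Finset.sum_nonneg fun i hi => ?_
  rw [map_smul, LinearMap.smul_apply, smul_eq_mul]
  exact mul_nonneg (hc i hi) ((hy i hi).2 κ hκ hκw hneg)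

section FiniteDimensional

variable [FiniteDimensional ℝ V]

lemma dominant_of_pos (hw : rle cs w γ) (hy : G.Pos y) (hyw : y ∈ G.mov w) :
    F.Dominant w y := by
  refine ⟨hyw, fun ι hι hιw hneg => ?_⟩
  have hπ : G.Pos (-G.act w ι) := pos_neg_of_height_neg (G.act_mem_roots w ι hι.1) hneg
  have hserre : ∀ z ∈ G.mov w, F.E (-G.act w ι) z = F.E z ι := fun z hz => by
    rw [map_neg, LinearMap.neg_apply, F.E_act hw hιw hz, neg_neg]
  by_contra! hlt
  have hπι : 0 < F.E (-G.act w ι) ι := by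
    rw [hserre ι hιw, F.E_self hι.1]
    norm_num
  have hyπ : F.key y < F.key (-G.act w ι) :=
    F.key_lt_of_E_neg hπ hy (by rwa [hserre y hyw])
  exact ((F.key_le_of_E_pos hπ hι hπι).trans_lt (F.key_lt_of_E_neg hy hι hlt)).not_gt hyπ

variable {F} in
/-- When dominance survives the passage from `w` to `refl ρ * w`; a root `ι` that only
`refl ρ * w` makes negative gives the root `σ = w ι` of the last hypothesis. -/
lemma Dominant.refl_mul_sub (hw : rle cs w γ) (hx : F.Dominant w x) (hρ : G.Pos ρ)
    (hρw : ρ ∈ G.mov w) {c : ℝ} (hρx : F.E ρ (x - c • ρ) = 0)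
    (h : ∀ σ, G.Pos σ → σ ∈ G.mov w → F.E σ ρ = 0 → 0 < F.E ρ σ →
      G.height (G.act (G.refl ρ) σ) < 0 → F.E σ x ≤ 0) :
    F.Dominant (G.refl ρ * w) (x - c • ρ) := by
  refine ⟨(F.mem_mov_refl_mul_iff hw hρ.1 hρw).2
    ⟨sub_mem hx.1 (Submodule.smul_mem _ _ hρw), hρx⟩, fun ι hι hιw hneg => ?_⟩
  obtain ⟨hιw, hρι⟩ := (F.mem_mov_refl_mul_iff hw hρ.1 hρw).1 hιw
  have hxι : F.E (x - c • ρ) ι = F.E x ι := by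
    rw [map_sub, map_smul, LinearMap.sub_apply, LinearMap.smul_apply, hρι, smul_zero, sub_zero]
  rw [hxι]
  rcases (G.height_ne_zero _ (G.act_mem_roots w ι hι.1)).lt_or_gt with hlt | hgt
  · exact hx.2 ι hι hιw hlt
  have hσ : G.Pos (G.act w ι) := ⟨G.act_mem_roots w ι hι.1, hgt⟩
  have hσρ : F.E (G.act w ι) ρ = 0 := by rw [F.E_act hw hιw hρw, hρι, neg_zero]
  rw [map_mul, Module.End.mul_apply] at hneg
  have hρσ : 0 < F.E ρ (G.act w ι) := by
    rw [F.act_refl_eq_sub_of_E_eq_zero hρ hσρ, map_sub, map_smul, smul_eq_mul] at hneg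
    by_contra! hle
    linarith [mul_nonpos_of_nonpos_of_nonneg hle hρ.2.le]
  have hσx := h _ hσ ((apply_mem_movedSpace_iff _).2 hιw) hσρ hρσ hneg
  rw [F.E_act hw hιw hx.1] at hσx
  linarith

section FirstRoot

variable {F} (hw : rle cs w γ) (hρ : G.Pos ρ) (hρw : ρ ∈ G.mov w)
  (hfirst : ∀ σ, G.Pos σ → σ ∈ G.mov w → F.key ρ ≤ F.key σ)
include hw hρ hρw hfirst

lemma pos_neg_act_inv_of_first : G.Pos (-G.act w⁻¹ ρ) := by
  have hmem : G.act w⁻¹ ρ ∈ G.mov w :=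
    (apply_mem_movedSpace_iff _).1 (by rwa [Representation.self_inv_apply])
  refine (pos_or_pos_neg (G.act_mem_roots w⁻¹ ρ hρ.1)).resolve_left fun hpos => ?_
  have hE := F.E_act hw hmem hρw
  rw [Representation.self_inv_apply, F.E_self hρ.1] at hE
  exact (F.key_lt_of_E_neg hρ hpos (by linarith)).not_ge (hfirst _ hpos hmem)

lemma Dominant.E_nonneg_of_first (hx : F.Dominant w x) : 0 ≤ F.E ρ x := by
  have hact : G.act w (-G.act w⁻¹ ρ) = -ρ := by rw [map_neg, Representation.self_inv_apply]
  have hmem : -G.act w⁻¹ ρ ∈ G.mov w :=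
    (apply_mem_movedSpace_iff _).1 (by rw [hact]; exact neg_mem hρw)
  have hpairing := hx.2 _ (pos_neg_act_inv_of_first hw hρ hρw hfirst) hmem
    (by rw [hact, map_neg]; linarith [hρ.2])
  have hserre := F.E_act hw hmem hx.1
  rw [hact, map_neg, LinearMap.neg_apply] at hserre
  linarith

lemma Dominant.refl_mul_of_first (hx : F.Dominant w x) (hρx : F.E ρ x = 0) :
    F.Dominant (G.refl ρ * w) x := by
  have hdom := hx.refl_mul_sub (c := 0) hw hρ hρw (by simpa using hρx)
    fun σ hσ hσw hσρ hρσ hneg => ?_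
  · simpa using hdom
  have hη := pos_neg_of_height_neg (G.act_mem_roots _ _ hσ.1) hneg
  rw [F.act_refl_eq_sub_of_E_eq_zero hρ hσρ, neg_sub] at hη
  have hEη : F.E ((2 * F.E ρ σ) • ρ - σ) ρ = F.E ρ σ := by
    simp only [map_sub, map_smul, LinearMap.sub_apply, LinearMap.smul_apply, hσρ,
      F.E_self hρ.1, smul_eq_mul]
    ring
  have hle := F.key_le_of_E_pos hη hρ (hEη.symm ▸ hρσ)
  have hge := hfirst _ hη (sub_mem (Submodule.smul_mem _ _ hρw) hσw)
  have heq := F.key_inj _ _ hη hρ (le_antisymm hle hge)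
  rw [heq, F.E_self hρ.1] at hEη
  rw [← hEη] at heq
  exact absurd (by simpa using heq) (ne_zero_of_mem_roots hσ.1)

end FirstRoot

lemma exists_pos_E_pos (hw : rle cs w γ) (hx : F.Dominant w x) (hx0 : x ≠ 0) :
    ∃ ρ, G.Pos ρ ∧ ρ ∈ G.mov w ∧ 0 < F.E ρ x := by
  induction hn : rlen cs w using Nat.strong_induction_on generalizing w with
  | _ n ih =>
    have hw1 : w ≠ 1 := by
      rintro rfl
      exact hx0 (by simpa [mov] using hx.1)
    obtain ⟨ρ, ⟨hρ, hρw⟩, hfirst⟩ := Set.exists_min_image _ F.key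
      (finite_setOf_pos_and (· ∈ G.mov w)) (exists_pos_mem_mov hw1)
    replace hfirst : ∀ σ, G.Pos σ → σ ∈ G.mov w → F.key ρ ≤ F.key σ :=
      fun σ hσ hσw => hfirst σ ⟨hσ, hσw⟩
    rcases (hx.E_nonneg_of_first hw hρ hρw hfirst).lt_or_eq with hpos | hzero
    · exact ⟨ρ, hρ, hρw, hpos⟩
    have hrlen := rlen_refl_mul hρ.1 hρw
    obtain ⟨σ, hσ, hσw, hσx⟩ := ih _ (by omega) (rle_refl_mul hw hρ.1 hρw)
      (hx.refl_mul_of_first hw hρ hρw hfirst hzero.symm) rfl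
    exact ⟨σ, hσ, mov_refl_mul_le_of_mem hρ.1 hρw hσw, hσx⟩

end FiniteDimensional

/-- `x` is a positive combination of the positive roots in the list, whose keys decrease and which
satisfy `E a b = 0` for `a` before `b`. The coefficient of the first root `ρ` is then forced to be
`2 E ρ x`, which is how it is encoded here. -/
def IsDecomposition : List V → V → Prop
  | [], x => x = 0
  | ρ :: l, x => G.Pos ρ ∧ 0 < F.E ρ x ∧ (∀ b ∈ l, F.key b < F.key ρ ∧ F.E ρ b = 0) ∧
      IsDecomposition l (x - (2 * F.E ρ x) • ρ)

namespace IsDecomposition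

variable {F} {l m : List V}

lemma pos_of_mem (h : F.IsDecomposition l x) : ∀ a ∈ l, G.Pos a := by
  induction l generalizing x with
  | nil => simp
  | cons ρ l ih => exact List.forall_mem_cons.2 ⟨h.1, ih h.2.2.2⟩

lemma pairwise (h : F.IsDecomposition l x) : l.Pairwise fun a b => F.E a b = 0 := by
  induction l generalizing x with
  | nil => exact List.Pairwise.nil
  | cons ρ l ih => exact List.pairwise_cons.2 ⟨fun b hb => (h.2.2.1 b hb).2, ih h.2.2.2⟩

lemma mem_span (h : F.IsDecomposition l x) : x ∈ Submodule.span ℝ {a | a ∈ l} := by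
  induction l generalizing x with
  | nil => exact (show x = 0 from h) ▸ zero_mem _
  | cons ρ l ih =>
    have hρ : ρ ∈ Submodule.span ℝ {a | a ∈ ρ :: l} := Submodule.subset_span List.mem_cons_self
    have hrest : x - (2 * F.E ρ x) • ρ ∈ Submodule.span ℝ {a | a ∈ ρ :: l} :=
      Submodule.span_mono (fun b hb => List.mem_cons_of_mem ρ hb) (ih h.2.2.2)
    exact (Submodule.sub_mem_iff_left _ (Submodule.smul_mem _ _ hρ)).1 hrest

lemma E_nonpos (h : F.IsDecomposition l x) (hy : ∀ a ∈ l, F.E y a ≤ 0) : F.E y x ≤ 0 := by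
  induction l generalizing x with
  | nil => simp [show x = 0 from h]
  | cons ρ l ih =>
    rw [List.forall_mem_cons] at hy
    have hrest := ih h.2.2.2 hy.2
    rw [map_sub, map_smul, smul_eq_mul] at hrest
    nlinarith [mul_nonpos_of_nonneg_of_nonpos h.2.1.le hy.1]

lemma E_nonpos_of_head_key_lt (h : F.IsDecomposition (ρ :: l) x) (hσ : G.Pos σ)
    (hlt : F.key ρ < F.key σ) : F.E σ x ≤ 0 := by
  refine h.E_nonpos (List.forall_mem_cons.2 ⟨F.E_nonpos_of_key_lt ρ σ h.1 hσ hlt, fun b hb => ?_⟩)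
  exact F.E_nonpos_of_key_lt b σ (h.pos_of_mem b (List.mem_cons_of_mem ρ hb)) hσ
    ((h.2.2.1 b hb).1.trans hlt)

lemma key_head_le (hl : F.IsDecomposition (ρ :: l) x) (hm : F.IsDecomposition (σ :: m) x) :
    F.key σ ≤ F.key ρ :=
  le_of_not_gt fun hlt => (hl.E_nonpos_of_head_key_lt hm.1 hlt).not_gt hm.2.1

theorem unique (hl : F.IsDecomposition l x) (hm : F.IsDecomposition m x) : l = m := by
  induction l generalizing m x with
  | nil =>
    obtain rfl : x = 0 := hl
    cases m with
    | nil => rfl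
    | cons σ m => exact absurd hm.2.1 (by simp)
  | cons ρ l ih =>
    cases m with
    | nil =>
      obtain rfl : x = 0 := hm
      exact absurd hl.2.1 (by simp)
    | cons σ m =>
      obtain rfl : ρ = σ :=
        F.key_inj _ _ hl.1 hm.1 (le_antisymm (hm.key_head_le hl) (hl.key_head_le hm))
      rw [ih hl.2.2.2 hm.2.2.2]

lemma key_lt_of_head (h : F.IsDecomposition l x)
    (hhead : ∀ σ ∈ l, G.Pos σ → 0 < F.E σ x → F.key σ < F.key ρ) :
    ∀ b ∈ l, F.key b < F.key ρ := by
  cases l with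
  | nil => simp
  | cons σ l =>
    have hσ := hhead σ List.mem_cons_self h.1 h.2.1
    exact List.forall_mem_cons.2 ⟨hσ, fun b hb => (h.2.2.1 b hb).1.trans hσ⟩

end IsDecomposition

section LastRoot

variable {F} (hρ : G.Pos ρ) (hρw : ρ ∈ G.mov w)
  (hlast : ∀ σ, G.Pos σ → σ ∈ G.mov w → 0 < F.E σ x → F.key σ ≤ F.key ρ)
include hρ hρw hlast

lemma key_lt_of_last (hσ : G.Pos σ) (hσw : σ ∈ G.mov w) (hρσ : F.E ρ σ = 0)
    (hσx : 0 < F.E σ (x - (2 * F.E ρ x) • ρ)) : F.key σ < F.key ρ := by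
  by_contra! hle
  have hne : F.key ρ ≠ F.key σ := fun heq => by
    rw [← F.key_inj ρ σ hρ hσ heq, F.E_self hρ.1] at hρσ
    norm_num at hρσ
  have hσρ : F.E σ ρ ≤ 0 := F.E_nonpos_of_key_lt ρ σ hρ hσ (hle.lt_of_ne hne)
  -- The reflection of `σ` in `ρ` contradicts the choice of `ρ`.
  have hτ : G.Pos (σ - (2 * F.E σ ρ) • ρ) := by
    constructor
    · rw [← add_zero (F.E σ ρ), ← hρσ, F.E_add_E, ← G.act_refl ρ hρ.1]
      exact G.act_mem_roots _ σ hσ.1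
    · rw [map_sub, map_smul, smul_eq_mul]
      linarith [hσ.2, mul_nonpos_of_nonpos_of_nonneg hσρ hρ.2.le]
  have hτx : 0 < F.E (σ - (2 * F.E σ ρ) • ρ) x := by
    simp only [map_sub, map_smul, LinearMap.sub_apply, LinearMap.smul_apply,
      smul_eq_mul] at hσx ⊢
    linarith
  have hτρ := hlast _ hτ (sub_mem hσw (Submodule.smul_mem _ _ hρw)) hτx
  have hρτ : F.E ρ (σ - (2 * F.E σ ρ) • ρ) = -F.E σ ρ := by
    rw [F.E_reflect_right hρ, hρσ]; ring
  rcases hσρ.lt_or_eq with hneg | hzero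
  · have hρτ_le := F.key_le_of_E_pos hρ hτ (by linarith)
    have heq := F.key_inj _ _ hτ hρ (le_antisymm hτρ hρτ_le)
    rw [heq, F.E_self hρ.1] at hρτ
    rw [show 2 * F.E σ ρ = -1 by linarith] at heq
    exact ne_zero_of_mem_roots hσ.1 (by simpa using heq)
  · rw [hzero, mul_zero, zero_smul, sub_zero] at hτρ
    exact hne (le_antisymm hle hτρ)

lemma Dominant.refl_mul_sub_of_last [FiniteDimensional ℝ V] (hw : rle cs w γ)
    (hx : F.Dominant w x) : F.Dominant (G.refl ρ * w) (x - (2 * F.E ρ x) • ρ) := by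
  refine hx.refl_mul_sub hw hρ hρw (by rw [F.E_reflect_right hρ]; ring)
    fun σ hσ hσw hσρ hρσ _ => ?_
  by_contra! hσx
  have heq := F.key_inj _ _ hρ hσ
    (le_antisymm (F.key_le_of_E_pos hρ hσ hρσ) (hlast σ hσ hσw hσx))
  rw [← heq, F.E_self hρ.1] at hσρ
  norm_num at hσρ

end LastRoot

theorem exists_isDecomposition [FiniteDimensional ℝ V] (hw : rle cs w γ) (hx : F.Dominant w x) :
    ∃ l, F.IsDecomposition l x ∧ ∀ a ∈ l, a ∈ G.mov w := by
  induction hn : rlen cs w using Nat.strong_induction_on generalizing w x with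
  | _ n ih =>
    by_cases hx0 : x = 0
    · exact ⟨[], hx0, by simp⟩
    obtain ⟨ρ, ⟨hρ, hρw, hρx⟩, hlast⟩ := Set.exists_max_image _ F.key
      (finite_setOf_pos_and fun σ => σ ∈ G.mov w ∧ 0 < F.E σ x) (F.exists_pos_E_pos hw hx hx0)
    replace hlast : ∀ σ, G.Pos σ → σ ∈ G.mov w → 0 < F.E σ x → F.key σ ≤ F.key ρ :=
      fun σ hσ hσw hσx => hlast σ ⟨hσ, hσw, hσx⟩
    have hrlen := rlen_refl_mul hρ.1 hρw
    obtain ⟨l, hl, hlw⟩ := ih _ (by omega) (rle_refl_mul hw hρ.1 hρw)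
      (hx.refl_mul_sub_of_last hρ hρw hlast hw) rfl
    replace hlw : ∀ b ∈ l, b ∈ G.mov w ∧ F.E ρ b = 0 :=
      fun b hb => (F.mem_mov_refl_mul_iff hw hρ.1 hρw).1 (hlw b hb)
    have hkey : ∀ b ∈ l, F.key b < F.key ρ := hl.key_lt_of_head fun σ hσl hσ hσx =>
      key_lt_of_last hρ hρw hlast hσ (hlw σ hσl).1 (hlw σ hσl).2 hσx
    exact ⟨ρ :: l, ⟨hρ, hρx, fun b hb => ⟨hkey b hb, (hlw b hb).2⟩, hl⟩,
      List.forall_mem_cons.2 ⟨hρw, fun b hb => (hlw b hb).1⟩⟩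

end OrderedEulerForm

/-! ### Meets -/

lemma mem_of_infinite_sum_pow_smul_mem {k V : Type*} [Field k] [AddCommGroup V] [Module k V]
    {p : Submodule k V} {n : ℕ} {v : Fin n → V} {T : Set k} (hT : T.Infinite)
    (h : ∀ t ∈ T, ∑ i : Fin n, t ^ (i : ℕ) • v i ∈ p) (i : Fin n) : v i ∈ p := by
  by_contra hi
  obtain ⟨f, hfi, hf⟩ := Submodule.exists_le_ker_of_notMem hi
  let P : Polynomial k := ∑ j : Fin n, Polynomial.C (f (v j)) * Polynomial.X ^ (j : ℕ)
  have hP : P = 0 := by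
    refine Polynomial.eq_zero_of_infinite_isRoot P (hT.mono fun t ht => show P.IsRoot t from ?_)
    have hzero : f (∑ i : Fin n, t ^ (i : ℕ) • v i) = 0 := hf (h t ht)
    simp only [map_sum, map_smul, smul_eq_mul] at hzero
    simpa only [P, Polynomial.IsRoot, Polynomial.eval_finsetSum, Polynomial.eval_mul,
      Polynomial.eval_C, Polynomial.eval_pow, Polynomial.eval_X, mul_comm] using hzero
  have hcoeff : P.coeff i = f (v i) := by
    simp [P, Fin.val_inj]
  exact hfi (by rw [← hcoeff, hP, Polynomial.coeff_zero])

namespace OrderedEulerForm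

open ReflectionRep

variable {cs : CoxeterSystem M W} {V : Type*} [AddCommGroup V] [Module ℝ V]
  [FiniteDimensional ℝ V] {G : ReflectionRep cs V} {γ u w : W} {K : Type*} [LinearOrder K]
  (F : OrderedEulerForm G γ K)

/-- By uniqueness, the decompositions of a common dominant vector with respect to `u` and `w`
agree. -/
lemma exists_isDecomposition_of_pos_combination (hu : rle cs u γ) (hw : rle cs w γ) {ι : Type*}
    [Fintype ι] {c : ι → ℝ} (hc : ∀ i, 0 ≤ c i) {ρ : ι → V}
    (hρ : ∀ i, G.Pos (ρ i) ∧ ρ i ∈ G.mov u ∧ ρ i ∈ G.mov w) :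
    ∃ l, F.IsDecomposition l (∑ i, c i • ρ i) ∧ ∀ a ∈ l, a ∈ G.mov u ∧ a ∈ G.mov w := by
  have hdom : ∀ v, rle cs v γ → (∀ i, ρ i ∈ G.mov v) → F.Dominant v (∑ i, c i • ρ i) :=
    fun v hv hρv =>
      .sum (fun i _ => F.dominant_of_pos hv (hρ i).1 (hρv i)) fun i _ => hc i
  obtain ⟨l, hl, hlu⟩ := F.exists_isDecomposition hu (hdom u hu fun i => (hρ i).2.1)
  obtain ⟨m, hm, hmw⟩ := F.exists_isDecomposition hw (hdom w hw fun i => (hρ i).2.2)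
  obtain rfl := hl.unique hm
  exact ⟨l, hl, fun a ha => ⟨hlu a ha, hmw a ha⟩⟩

/-- If `ρ₀, …, ρₙ₋₁` are the common positive roots, then for infinitely many `t` the vectors
`∑ tⁱ ρᵢ` have the same roots in their decompositions, and these roots span all the `ρᵢ`. -/
lemma exists_triangular_list_spanning_common_roots (hu : rle cs u γ) (hw : rle cs w γ) :
    ∃ l : List V, (∀ a ∈ l, G.Pos a ∧ a ∈ G.mov u ∧ a ∈ G.mov w) ∧
      (l.Pairwise fun a b => F.E a b = 0) ∧
      ∀ ρ, G.Pos ρ → ρ ∈ G.mov u → ρ ∈ G.mov w → ρ ∈ Submodule.span ℝ {a | a ∈ l} := by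
  let common : Set V := {ρ | G.Pos ρ ∧ ρ ∈ G.mov u ∧ ρ ∈ G.mov w}
  obtain ⟨n, ρ, -, hρ⟩ := Set.Finite.fin_param (s := common) (finite_setOf_pos_and _)
  have hρ_mem : ∀ i, ρ i ∈ common := fun i => hρ ▸ Set.mem_range_self i
  choose l hl hluw using fun t : ℕ => F.exists_isDecomposition_of_pos_combination hu hw
    (c := fun i : Fin n => (t : ℝ) ^ (i : ℕ)) (fun i => by positivity) hρ_mem
  have hl_common : ∀ t, ∀ a ∈ l t, a ∈ common := fun t a ha => ⟨(hl t).pos_of_mem a ha, hluw t a ha⟩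
  have : Finite common := finite_setOf_pos_and _
  obtain ⟨S, hS⟩ := Finite.exists_infinite_fiber fun t => {a : common | a.1 ∈ l t}
  rw [Set.infinite_coe_iff] at hS
  obtain ⟨t₀, ht₀⟩ := hS.nonempty
  have hsub : ∀ t ∈ (fun t => {a : common | a.1 ∈ l t}) ⁻¹' {S}, ∀ a ∈ l t, a ∈ l t₀ := by
    intro t ht a ha
    have hset : {a : common | a.1 ∈ l t} = {a : common | a.1 ∈ l t₀} := ht.trans ht₀.symm
    exact (Set.ext_iff.1 hset ⟨a, hl_common t a ha⟩).1 ha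
  refine ⟨l t₀, hl_common t₀, (hl t₀).pairwise, fun x hx hxu hxw => ?_⟩
  obtain ⟨i, rfl⟩ : x ∈ Set.range ρ := hρ ▸ ⟨hx, hxu, hxw⟩
  refine mem_of_infinite_sum_pow_smul_mem (hS.image (f := ((↑) : ℕ → ℝ)) Nat.cast_injective.injOn)
    ?_ i
  rintro _ ⟨t, ht, rfl⟩
  exact Submodule.span_mono (hsub t ht) (hl t).mem_span

theorem exists_isIntervalGLB (F : OrderedEulerForm G γ K) (hu : rle cs u γ) (hw : rle cs w γ) :
    ∃ m, IsIntervalGLB cs γ {u, w} m := by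
  obtain ⟨l, hl, hE, hspan⟩ := F.exists_triangular_list_spanning_common_roots hu hw
  obtain ⟨m, hm, hmov⟩ := F.exists_mov_eq_span (fun a ha => (hl a ha).1.1) hE
  have hmu : G.mov m ≤ G.mov u := hmov ▸ Submodule.span_le.2 fun a ha => (hl a ha).2.1
  have hmw : G.mov m ≤ G.mov w := hmov ▸ Submodule.span_le.2 fun a ha => (hl a ha).2.2
  refine ⟨m, hm, by simpa using ⟨F.rle_of_mov_le hm hu hmu, F.rle_of_mov_le hm hw hmw⟩,
    fun r hr hlower => F.rle_of_mov_le hr hm ?_⟩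
  have hru : G.mov r ≤ G.mov u := mov_le_of_rle (hlower u (by simp))
  have hrw : G.mov r ≤ G.mov w := mov_le_of_rle (hlower w (by simp))
  rw [mov_eq_span_roots r, hmov]
  refine Submodule.span_le.2 fun x ⟨hx, hxr⟩ => ?_
  rcases pos_or_pos_neg hx with hpos | hneg
  · exact hspan x hpos (hru hxr) (hrw hxr)
  · exact (Submodule.neg_mem_iff _).1
      (hspan (-x) hneg (neg_mem (hru hxr)) (neg_mem (hrw hxr)))

end OrderedEulerForm

/-! ### The geometric representation -/

section Chebyshev

open Real Polynomial

lemma sin_two_pi_div_pos {m : ℕ} (hm : 3 ≤ m) : 0 < sin (2 * π / m) := by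
  have hm' : (3 : ℝ) ≤ m := by exact_mod_cast hm
  refine sin_pos_of_pos_of_lt_pi (by positivity) ?_
  rw [div_lt_iff₀ (by linarith)]
  nlinarith [pi_pos]

lemma chebyshevS_eval_eq_zero_of_even {k : ℕ} (hk : 2 ≤ k) :
    (Chebyshev.S ℝ (k - 1)).eval (2 * cos (2 * π / (2 * k : ℕ))) = 0 := by
  have hk0 : (k : ℝ) ≠ 0 := by positivity
  have hangle : (((k - 1 : ℤ) : ℝ) + 1) * (2 * π / (2 * k : ℕ)) = π := by
    push_cast
    field_simp
    ring
  have h := Chebyshev.S_two_mul_real_cos (2 * π / (2 * k : ℕ)) (k - 1)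
  rw [hangle, sin_pi] at h
  exact (mul_eq_zero.1 h).resolve_right (sin_two_pi_div_pos (by omega)).ne'

lemma chebyshevS_eval_add_eq_zero_of_odd {k : ℕ} (hk : 1 ≤ k) :
    (Chebyshev.S ℝ k).eval (2 * cos (2 * π / (2 * k + 1 : ℕ))) +
      (Chebyshev.S ℝ (k - 1)).eval (2 * cos (2 * π / (2 * k + 1 : ℕ))) = 0 := by
  have hangle : (((k : ℤ) : ℝ) + 1) * (2 * π / (2 * k + 1 : ℕ)) =
      2 * π - (((k - 1 : ℤ) : ℝ) + 1) * (2 * π / (2 * k + 1 : ℕ)) := by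
    push_cast
    field_simp
    ring
  refine (mul_eq_zero.1 ?_).resolve_right
    (sin_two_pi_div_pos (m := 2 * k + 1) (by omega)).ne'
  rw [add_mul, Chebyshev.S_two_mul_real_cos, Chebyshev.S_two_mul_real_cos, hangle, sin_two_pi_sub]
  exact neg_add_cancel _

lemma chebyshevU_eval_nonneg {m n : ℕ} (hm : m ≠ 1) (hn : m = 0 ∨ n ≤ m) :
    0 ≤ (Chebyshev.U ℝ (n - 1)).eval (cos (π / m)) := by
  rcases Nat.eq_zero_or_pos m with rfl | hpos
  · simp
  have hm2 : (2 : ℝ) ≤ m := by exact_mod_cast (by omega : 2 ≤ m)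
  have hnm : (n : ℝ) ≤ m := by exact_mod_cast (by omega : n ≤ m)
  have hsin : 0 < sin (π / m) := by
    refine sin_pos_of_pos_of_lt_pi (by positivity) ?_
    rw [div_lt_iff₀ (by linarith)]
    nlinarith [pi_pos]
  have hsin' : 0 ≤ sin (n * (π / m)) := by
    refine sin_nonneg_of_nonneg_of_le_pi (by positivity) ?_
    rw [mul_div_assoc', div_le_iff₀ (by linarith)]
    nlinarith [pi_pos]
  refine nonneg_of_mul_nonneg_left ?_ hsin
  rw [Chebyshev.U_real_cos]
  simpa using hsin'

end Chebyshev

section ReflectionPair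

open Module

variable {V : Type*} [AddCommGroup V] [Module ℝ V] {x y : V} {f g : Dual ℝ V}

lemma reflection_mul_reflection_sq (hf : f x = 2) (hg : g y = 2) (hfy : f y = 0) (hgx : g x = 0) :
    (reflection hf * reflection hg) ^ 2 = 1 := by
  ext z
  simp only [pow_two, LinearEquiv.mul_apply, reflection_apply, map_sub, map_smul, hf, hg, hfy, hgx,
    LinearEquiv.coe_one, id]
  module

lemma reflection_mul_reflection_pow (hf : f x = 2) (hg : g y = 2) {m : ℕ} (hm : 3 ≤ m)
    (h : f y * g x = 4 * Real.cos (Real.pi / m) ^ 2) :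
    (reflection hf * reflection hg) ^ m = 1 := by
  have hcos : 2 * Real.cos (2 * Real.pi / m) = f y * g x - 2 := by
    rw [h, mul_div_assoc, Real.cos_two_mul]
    ring
  ext z
  rw [reflection_mul_reflection_pow_apply hf hg m z _ hcos]
  rcases Nat.even_or_odd' m with ⟨k, rfl | rfl⟩
  · have h₁ : (((2 * k : ℕ) : ℤ) - 2) / 2 = k - 1 := by omega
    have h₂ : (((2 * k : ℕ) : ℤ) - 1) / 2 = k - 1 := by omega
    rw [h₁, h₂, chebyshevS_eval_eq_zero_of_even (by omega)]
    simp
  · have h₁ : (((2 * k + 1 : ℕ) : ℤ) - 1) / 2 = k := by omega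
    have h₂ : (((2 * k + 1 : ℕ) : ℤ) - 3) / 2 = k - 1 := by omega
    have h₃ : ((2 * k + 1 : ℕ) : ℤ) / 2 = k := by omega
    have h₄ : (((2 * k + 1 : ℕ) : ℤ) - 2) / 2 = k - 1 := by omega
    rw [h₁, h₂, h₃, h₄, chebyshevS_eval_add_eq_zero_of_odd (by omega)]
    simp

end ReflectionPair

section AlternatingSuffix

variable (cs : CoxeterSystem M W)

lemma exists_eq_mul_alternatingWord (w : W) {s t : B} (hs : ¬ cs.IsRightDescent w s) :
    ∃ v k, w = v * cs.wordProd (CoxeterSystem.alternatingWord s t k) ∧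
      cs.length w = cs.length v + k ∧ ¬ cs.IsRightDescent v s ∧ ¬ cs.IsRightDescent v t := by
  induction hn : cs.length w generalizing w s t with
  | zero =>
    rw [cs.length_eq_zero_iff] at hn
    subst hn
    exact ⟨1, 0, by simp [CoxeterSystem.alternatingWord], by simp, cs.not_isRightDescent_one s,
      cs.not_isRightDescent_one t⟩
  | succ n ih =>
    by_cases ht : cs.IsRightDescent w t
    · have hlen := cs.isRightDescent_iff.1 ht
      obtain ⟨v, k, hwv, hk, hvt, hvs⟩ := ih (w * cs.simple t) (s := t) (t := s)
        (cs.isRightDescent_iff_not_isRightDescent_mul.1 ht) (by omega)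
      refine ⟨v, k + 1, ?_, by omega, hvs, hvt⟩
      rw [CoxeterSystem.alternatingWord_succ, cs.wordProd_concat, ← mul_assoc, ← hwv,
        cs.simple_mul_simple_cancel_right]
    · exact ⟨w, 0, by simp [CoxeterSystem.alternatingWord], hn.symm, hs, ht⟩

lemma alternatingWord_suffix_lt {w v : W} {s t : B} {k : ℕ} (hs : ¬ cs.IsRightDescent w s)
    (hwv : w = v * cs.wordProd (CoxeterSystem.alternatingWord s t k))
    (hlen : cs.length w = cs.length v + k) : M s t = 0 ∨ k < M s t := by
  by_contra! hcon
  refine cs.not_isReduced_alternatingWord t s (m := k + 1) (by rw [M.symmetric]; exact hcon.1)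
    (by rw [M.symmetric]; omega) ?_
  have hws : w * cs.simple s = v * cs.wordProd (CoxeterSystem.alternatingWord t s (k + 1)) := by
    rw [CoxeterSystem.alternatingWord_succ, cs.wordProd_concat, ← mul_assoc, ← hwv]
  have hmul := cs.length_mul_le v (cs.wordProd (CoxeterSystem.alternatingWord t s (k + 1)))
  have hword := cs.length_wordProd_le (CoxeterSystem.alternatingWord t s (k + 1))
  rw [← hws, cs.not_isRightDescent_iff.1 hs] at hmul
  rw [CoxeterSystem.length_alternatingWord] at hword
  rw [CoxeterSystem.IsReduced, CoxeterSystem.length_alternatingWord]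
  omega

end AlternatingSuffix

section GeometricRep

open Real Polynomial

variable [DecidableEq B]

/-- The simple root `α i`: the standard basis vector. -/
abbrev simpleRoot (i : B) : B → ℝ := Pi.single i 1

lemma simpleRoot_ne_zero (i : B) : simpleRoot i ≠ 0 := by simp

variable [Fintype B]

/-- The Tits form, with Gram matrix `-cos (π / M i j)` on the simple roots. The value `M i j = 0`,
which encodes infinite order, gives the customary `-1`. -/
noncomputable def titsForm (M : CoxeterMatrix B) : LinearMap.BilinForm ℝ (B → ℝ) :=
  Matrix.toBilin' (Matrix.of fun i j => -cos (π / M i j))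

lemma titsForm_simpleRoot (M : CoxeterMatrix B) (i j : B) :
    titsForm M (simpleRoot i) (simpleRoot j) = -cos (π / M i j) :=
  Matrix.toBilin'_single _ i j

lemma titsForm_simpleRoot_self (M : CoxeterMatrix B) (i : B) :
    titsForm M (simpleRoot i) (simpleRoot i) = 1 := by
  simp [titsForm_simpleRoot]

lemma titsForm_comm (M : CoxeterMatrix B) (x y : B → ℝ) : titsForm M x y = titsForm M y x := by
  simp only [titsForm, Matrix.toBilin'_apply, Matrix.of_apply]
  rw [Finset.sum_comm]
  simp only [M.symmetric, mul_comm, mul_left_comm]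

/-- The simple coroot, twice the Tits form with the simple root. -/
noncomputable def simpleCoroot (M : CoxeterMatrix B) (i : B) : Module.Dual ℝ (B → ℝ) :=
  (2 : ℝ) • titsForm M (simpleRoot i)

lemma simpleCoroot_apply (M : CoxeterMatrix B) (i : B) (v : B → ℝ) :
    simpleCoroot M i v = 2 * titsForm M v (simpleRoot i) := by
  simp [simpleCoroot, titsForm_comm M v]

lemma simpleCoroot_simpleRoot_self (M : CoxeterMatrix B) (i : B) :
    simpleCoroot M i (simpleRoot i) = 2 := by
  rw [simpleCoroot_apply, titsForm_simpleRoot_self, mul_one]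

lemma reflection_simple_mul_pow (M : CoxeterMatrix B) (i j : B) :
    (Module.reflection (simpleCoroot_simpleRoot_self M i) *
      Module.reflection (simpleCoroot_simpleRoot_self M j)) ^ M i j = 1 := by
  by_cases hij : i = j
  · subst hij
    rw [M.diagonal, pow_one]
    ext1 z
    exact Module.involutive_reflection _ z
  have hne : M i j ≠ 1 := M.off_diagonal i j hij
  have hji : simpleCoroot M i (simpleRoot j) = -2 * cos (π / M i j) := by
    rw [simpleCoroot_apply, titsForm_simpleRoot, M.symmetric]; ring
  have hij : simpleCoroot M j (simpleRoot i) = -2 * cos (π / M i j) := by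
    rw [simpleCoroot_apply, titsForm_simpleRoot]; ring
  obtain h | h | h : M i j = 0 ∨ M i j = 2 ∨ 3 ≤ M i j := by omega
  · rw [h, pow_zero]
  · rw [h] at hij hji ⊢
    exact reflection_mul_reflection_sq _ _ (by simp [hji]) (by simp [hij])
  · exact reflection_mul_reflection_pow _ _ h (by rw [hij, hji]; ring)

lemma isLiftable_reflection_simple (M : CoxeterMatrix B) : M.IsLiftable fun i =>
    ((Module.reflection (simpleCoroot_simpleRoot_self M i)).toLinearMap :
      Module.End ℝ (B → ℝ)) := by
  intro i j
  refine Eq.trans ?_ (congrArg LinearEquiv.toLinearMap (reflection_simple_mul_pow M i j))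
  exact (map_pow (LinearEquiv.automorphismGroup.toLinearMapMonoidHom (R := ℝ) (M := B → ℝ))
    (Module.reflection (simpleCoroot_simpleRoot_self M i) *
      Module.reflection (simpleCoroot_simpleRoot_self M j)) (M i j)).symm

/-- The geometric representation of a Coxeter group. -/
noncomputable def geometricRep (cs : CoxeterSystem M W) : Representation ℝ W (B → ℝ) :=
  cs.lift ⟨_, isLiftable_reflection_simple M⟩

variable (cs : CoxeterSystem M W)

lemma geometricRep_simple (i : B) (v : B → ℝ) :
    geometricRep cs (cs.simple i) v = v - (2 * titsForm M v (simpleRoot i)) • simpleRoot i := by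
  rw [geometricRep, cs.lift_apply_simple, ← simpleCoroot_apply]
  exact Module.reflection_apply (y := v) (simpleCoroot_simpleRoot_self M i)

lemma geometricRep_mul (u v : W) (x : B → ℝ) :
    geometricRep cs (u * v) x = geometricRep cs u (geometricRep cs v x) := by
  rw [map_mul, Module.End.mul_apply]

lemma geometricRep_simple_self (i : B) :
    geometricRep cs (cs.simple i) (simpleRoot i) = -simpleRoot i := by
  rw [geometricRep_simple, titsForm_simpleRoot_self, mul_one, two_smul]; abel

lemma titsForm_geometricRep (w : W) (x y : B → ℝ) :
    titsForm M (geometricRep cs w x) (geometricRep cs w y) = titsForm M x y := by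
  induction w using cs.simple_induction_left generalizing x y with
  | one => simp
  | mul_simple_left w i ih =>
    rw [geometricRep_mul, geometricRep_mul, ← ih x y]
    simp only [geometricRep_simple, map_sub, map_smul, LinearMap.sub_apply, LinearMap.smul_apply,
      smul_eq_mul, titsForm_simpleRoot_self, titsForm_comm M (simpleRoot i)]
    ring

lemma titsForm_geometricRep_left (w : W) (x y : B → ℝ) :
    titsForm M (geometricRep cs w x) y = titsForm M x (geometricRep cs w⁻¹ y) := by
  rw [← titsForm_geometricRep cs w x, Representation.self_inv_apply]

lemma geometricRep_conj_simple (u : W) (i : B) (v : B → ℝ) :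
    geometricRep cs (u * cs.simple i * u⁻¹) v =
      v - (2 * titsForm M v (geometricRep cs u (simpleRoot i))) •
        geometricRep cs u (simpleRoot i) := by
  rw [geometricRep_mul, geometricRep_mul, geometricRep_simple, map_sub, map_smul,
    titsForm_geometricRep_left, inv_inv, Representation.self_inv_apply]

/-- On the plane of `α s` and `α t` alternating products act through the polynomials `Uₙ`, which
give `sin ((n + 1) θ) / sin θ` at `cos θ`. -/
lemma geometricRep_alternatingWord (s t : B) (n : ℕ) :
    geometricRep cs (cs.wordProd (CoxeterSystem.alternatingWord s t n)) (simpleRoot s) =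
      (Chebyshev.U ℝ n).eval (cos (π / M s t)) • simpleRoot (if Even n then s else t) +
      (Chebyshev.U ℝ (n - 1)).eval (cos (π / M s t)) • simpleRoot (if Even n then t else s) := by
  induction n with
  | zero => simp [CoxeterSystem.alternatingWord]
  | succ n ih =>
    have hparity : Even (n + 1) ↔ ¬ Even n := Nat.even_add_one
    have hform : titsForm M (simpleRoot (if Even n then s else t))
        (simpleRoot (if Even n then t else s)) = -cos (π / M s t) := by
      split_ifs <;> simp [titsForm_simpleRoot, M.symmetric t s]
    have hrec : (Chebyshev.U ℝ (n + 1)).eval (cos (π / M s t)) =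
        2 * cos (π / M s t) * (Chebyshev.U ℝ n).eval (cos (π / M s t)) -
          (Chebyshev.U ℝ (n - 1)).eval (cos (π / M s t)) := by
      simp [Chebyshev.U_add_one]
    rw [CoxeterSystem.alternatingWord_succ', cs.wordProd_cons, geometricRep_mul, ih, map_add,
      map_smul, map_smul, geometricRep_simple_self, geometricRep_simple, hform, Nat.cast_succ,
      add_sub_cancel_right, hrec]
    simp only [hparity, ite_not]
    module

theorem geometricRep_simpleRoot_nonneg (w : W) (s : B) (hs : ¬ cs.IsRightDescent w s) :
    0 ≤ geometricRep cs w (simpleRoot s) := by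
  induction hn : cs.length w using Nat.strong_induction_on generalizing w s with
  | _ n ih =>
    by_cases hw : w = 1
    · simp [hw]
    obtain ⟨t, ht⟩ := cs.exists_rightDescent_of_ne_one hw
    have hst : s ≠ t := by rintro rfl; exact hs ht
    obtain ⟨v, k, hwv, hlen, hvs, hvt⟩ := exists_eq_mul_alternatingWord cs w (t := t) hs
    have hk : k ≠ 0 := by
      rintro rfl
      exact hvt (by simpa [hwv, CoxeterSystem.alternatingWord] using ht)
    have hkM := alternatingWord_suffix_lt cs hs hwv hlen
    have hM : M s t ≠ 1 := M.off_diagonal s t hst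
    have hnonneg : ∀ i ∈ ({s, t} : Set B), 0 ≤ geometricRep cs v (simpleRoot i) := by
      rintro i (rfl | rfl)
      exacts [ih _ (by omega) v _ hvs rfl, ih _ (by omega) v _ hvt rfl]
    have hU : 0 ≤ (Chebyshev.U ℝ k).eval (cos (π / M s t)) := by
      simpa using chebyshevU_eval_nonneg (n := k + 1) hM (by omega)
    rw [hwv, geometricRep_mul, geometricRep_alternatingWord, map_add, map_smul, map_smul]
    exact add_nonneg (smul_nonneg hU (hnonneg _ (by split_ifs <;> simp)))
      (smul_nonneg (chebyshevU_eval_nonneg hM (by omega)) (hnonneg _ (by split_ifs <;> simp)))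

lemma geometricRep_simpleRoot_nonpos (w : W) (s : B) (hs : cs.IsRightDescent w s) :
    geometricRep cs w (simpleRoot s) ≤ 0 := by
  have h := geometricRep_simpleRoot_nonneg cs (w * cs.simple s) s
    (cs.isRightDescent_iff_not_isRightDescent_mul.1 hs)
  rwa [geometricRep_mul, geometricRep_simple_self, map_neg, neg_nonneg] at h

lemma eq_one_of_geometricRep_simpleRoot_nonneg {w : W}
    (h : ∀ i, 0 ≤ geometricRep cs w (simpleRoot i)) : w = 1 := by
  by_contra hw
  obtain ⟨i, hi⟩ := cs.exists_rightDescent_of_ne_one hw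
  have hzero := le_antisymm (geometricRep_simpleRoot_nonpos cs w i hi) (h i)
  have hinv := (geometricRep cs).inv_self_apply w (simpleRoot i)
  rw [hzero, map_zero] at hinv
  exact simpleRoot_ne_zero i hinv.symm

lemma geometricRep_injective : Function.Injective (geometricRep cs) := by
  refine (injective_iff_map_eq_one _).2 fun w hw => eq_one_of_geometricRep_simpleRoot_nonneg cs ?_
  simp [hw]

end GeometricRep

/-! ### Roots of a finite Coxeter group -/

section CoordSum

variable [Fintype B]

variable (B) in
/-- The sum of the coordinates in the basis of simple roots. -/
def coordSum : Module.Dual ℝ (B → ℝ) := ∑ i, LinearMap.proj i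

lemma coordSum_apply (x : B → ℝ) : coordSum B x = ∑ i, x i := by simp [coordSum]

lemma coordSum_pos {x : B → ℝ} (h : 0 ≤ x) (hx : x ≠ 0) : 0 < coordSum B x := by
  rw [coordSum_apply]
  exact Fintype.sum_pos (lt_of_le_of_ne h hx.symm)

end CoordSum

section Roots

variable [DecidableEq B] [Fintype B] (cs : CoxeterSystem M W)

lemma eq_sum_smul_simpleRoot (x : B → ℝ) : x = ∑ i, x i • simpleRoot i := by
  simpa [← Pi.single_smul] using (Finset.univ_sum_single x).symm

lemma titsForm_nonneg {μ x : B → ℝ} (hμ : ∀ i, 0 ≤ titsForm M μ (simpleRoot i)) (hx : 0 ≤ x) :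
    0 ≤ titsForm M μ x := by
  rw [eq_sum_smul_simpleRoot x, map_sum]
  refine Finset.sum_nonneg fun i _ => ?_
  rw [map_smul]
  exact mul_nonneg (hx i) (hμ i)

lemma norm_geometricRep [Fintype W] : (geometricRep cs).norm = 0 := by
  refine (Pi.basisFun ℝ B).ext fun i => ?_
  rw [Pi.basisFun_apply]
  have h := (geometricRep cs).norm_self_apply (cs.simple i) (simpleRoot i)
  rw [geometricRep_simple_self, map_neg] at h
  exact neg_eq_self.1 h

lemma eq_zero_of_geometricRep_eq_self [Finite W] {z : B → ℝ}
    (h : ∀ w, geometricRep cs w z = z) : z = 0 := by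
  cases nonempty_fintype W
  have hnorm : (geometricRep cs).norm z = Fintype.card W • z := by
    simp [Representation.norm, h]
  rw [norm_geometricRep, LinearMap.zero_apply] at hnorm
  exact (smul_eq_zero.1 hnorm.symm).resolve_left Fintype.card_ne_zero

include cs in
/-- A vector in the radical is fixed by all simple reflections, hence by `W`. -/
lemma eq_zero_of_titsForm_eq_zero [Finite W] {z : B → ℝ} (h : ∀ y, titsForm M z y = 0) :
    z = 0 := by
  refine eq_zero_of_geometricRep_eq_self cs fun w => ?_
  induction w using cs.simple_induction_left with
  | one => simp
  | mul_simple_left w i ih => rw [geometricRep_mul, ih, geometricRep_simple, h]; simp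

include cs in
lemma exists_titsForm_eq [Finite W] (f : Module.Dual ℝ (B → ℝ)) : ∃ z, titsForm M z = f := by
  have hinj : Function.Injective (titsForm M) := by
    refine (injective_iff_map_eq_zero _).2 fun z hz => eq_zero_of_titsForm_eq_zero cs fun y => ?_
    rw [hz, LinearMap.zero_apply]
  exact (LinearMap.injective_iff_surjective_of_finrank_eq_finrank
    (Subspace.dual_finrank_eq (K := ℝ) (V := B → ℝ)).symm).1 hinj f

/-- The roots: the images of the simple roots under the group. -/
def rootSet : Set (B → ℝ) :=
  Set.range fun p : W × B => geometricRep cs p.1 (simpleRoot p.2)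

lemma geometricRep_simpleRoot_mem (w : W) (i : B) :
    geometricRep cs w (simpleRoot i) ∈ rootSet cs := ⟨(w, i), rfl⟩

variable {cs} {x : B → ℝ}

lemma geometricRep_mem_rootSet (hx : x ∈ rootSet cs) (w : W) :
    geometricRep cs w x ∈ rootSet cs := by
  obtain ⟨⟨u, i⟩, rfl⟩ := hx
  exact ⟨(w * u, i), geometricRep_mul cs w u _⟩

lemma neg_mem_rootSet (hx : x ∈ rootSet cs) : -x ∈ rootSet cs := by
  obtain ⟨⟨u, i⟩, rfl⟩ := hx
  exact ⟨(u * cs.simple i, i), by simp only [geometricRep_mul, geometricRep_simple_self, map_neg]⟩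

lemma titsForm_self_of_mem_rootSet (hx : x ∈ rootSet cs) : titsForm M x x = 1 := by
  obtain ⟨⟨u, i⟩, rfl⟩ := hx
  rw [titsForm_geometricRep, titsForm_simpleRoot_self]

lemma nonneg_or_nonpos_of_mem_rootSet (hx : x ∈ rootSet cs) : 0 ≤ x ∨ x ≤ 0 := by
  obtain ⟨⟨u, i⟩, rfl⟩ := hx
  by_cases h : cs.IsRightDescent u i
  · exact .inr (geometricRep_simpleRoot_nonpos cs u i h)
  · exact .inl (geometricRep_simpleRoot_nonneg cs u i h)

lemma nonneg_of_titsForm_pos {μ : B → ℝ} (hμ : ∀ i, 0 ≤ titsForm M μ (simpleRoot i))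
    (hx : x ∈ rootSet cs) (h : 0 < titsForm M μ x) : 0 ≤ x := by
  refine (nonneg_or_nonpos_of_mem_rootSet hx).resolve_right fun hneg => ?_
  have hnonneg := titsForm_nonneg hμ (neg_nonneg.2 hneg)
  rw [map_neg] at hnonneg
  linarith

lemma coordSum_simpleRoot (i : B) : coordSum B (simpleRoot i) = 1 := by simp [coordSum_apply]

lemma ne_zero_of_mem_rootSet (hx : x ∈ rootSet cs) : x ≠ 0 := by
  rintro rfl
  simpa using titsForm_self_of_mem_rootSet hx

lemma coordSum_ne_zero_of_mem_rootSet (hx : x ∈ rootSet cs) : coordSum B x ≠ 0 := by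
  have hx₀ := ne_zero_of_mem_rootSet hx
  rcases nonneg_or_nonpos_of_mem_rootSet hx with h | h
  · exact (coordSum_pos h hx₀).ne'
  · rw [← neg_ne_zero, ← map_neg]
    exact (coordSum_pos (neg_nonneg.2 h) (neg_ne_zero.2 hx₀)).ne'

lemma nonneg_of_coordSum_pos (hx : x ∈ rootSet cs) (h : 0 < coordSum B x) : 0 ≤ x := by
  refine (nonneg_or_nonpos_of_mem_rootSet hx).resolve_right fun hneg => ?_
  rw [coordSum_apply] at h
  exact h.not_ge (Finset.sum_nonpos fun j _ => hneg j)

variable (cs) in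
/-- The reflection in a root (its values outside `rootSet cs` are irrelevant). -/
noncomputable def rootReflection (x : B → ℝ) : W :=
  Classical.epsilon fun t => cs.IsReflection t ∧
    ∀ v, geometricRep cs t v = v - (2 * titsForm M v x) • x

lemma rootReflection_spec (hx : x ∈ rootSet cs) : cs.IsReflection (rootReflection cs x) ∧
    ∀ v, geometricRep cs (rootReflection cs x) v = v - (2 * titsForm M v x) • x := by
  obtain ⟨⟨u, i⟩, rfl⟩ := hx
  exact Classical.epsilon_spec (p := fun t => cs.IsReflection t ∧ ∀ v, geometricRep cs t v =
    v - (2 * titsForm M v (geometricRep cs u (simpleRoot i))) • geometricRep cs u (simpleRoot i))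
    ⟨u * cs.simple i * u⁻¹, ⟨u, i, rfl⟩, geometricRep_conj_simple cs u i⟩

lemma exists_rootReflection_eq {t : W} (ht : cs.IsReflection t) :
    ∃ x ∈ rootSet cs, rootReflection cs x = t := by
  obtain ⟨u, i, rfl⟩ := ht
  have hx := geometricRep_simpleRoot_mem cs u i
  refine ⟨_, hx, geometricRep_injective cs (LinearMap.ext fun v => ?_)⟩
  rw [(rootReflection_spec hx).2, geometricRep_conj_simple]

lemma eq_one_of_geometricRep_eq_self {w : W} {z : B → ℝ}
    (hz : ∀ i, 0 < titsForm M z (simpleRoot i)) (hwz : geometricRep cs w z = z) : w = 1 := by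
  refine eq_one_of_geometricRep_simpleRoot_nonneg cs fun i =>
    nonneg_of_titsForm_pos (fun j => (hz j).le) (geometricRep_simpleRoot_mem cs w i) ?_
  have h := titsForm_geometricRep cs w z (simpleRoot i)
  rw [hwz] at h
  exact h ▸ hz i

variable [Finite W]

/-- The translate of maximal coordinate sum lies in the fundamental chamber. -/
lemma exists_geometricRep_mem_chamber {z : B → ℝ} (hz : ∀ x ∈ rootSet cs, titsForm M z x ≠ 0) :
    ∃ u, ∀ i, 0 < titsForm M (geometricRep cs u z) (simpleRoot i) := by
  obtain ⟨u, hu⟩ := Finite.exists_max fun u : W => coordSum B (geometricRep cs u z)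
  refine ⟨u, fun i => lt_of_le_of_ne ?_ ?_⟩
  · have h := hu (cs.simple i * u)
    rw [geometricRep_mul, geometricRep_simple, map_sub, map_smul, coordSum_simpleRoot,
      smul_eq_mul] at h
    linarith
  · rw [titsForm_geometricRep_left]
    exact (hz _ (geometricRep_simpleRoot_mem cs u⁻¹ i)).symm

lemma exists_geometricRep_eq_self_of_notMem_movedSpace {w : W}
    (hx : x ∉ movedSpace (geometricRep cs) w) :
    ∃ z, geometricRep cs w z = z ∧ titsForm M z x ≠ 0 := by
  obtain ⟨f, hfx, hf⟩ := Submodule.exists_le_ker_of_notMem hx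
  obtain ⟨z, rfl⟩ := exists_titsForm_eq cs f
  refine ⟨z, ?_, hfx⟩
  have hinv : z - geometricRep cs w⁻¹ z = 0 := by
    refine eq_zero_of_titsForm_eq_zero cs fun y => ?_
    rw [map_sub, LinearMap.sub_apply, titsForm_geometricRep_left, inv_inv, ← map_sub]
    exact hf (sub_apply_mem_movedSpace _ w y)
  simpa using congr(geometricRep cs w $(sub_eq_zero.1 hinv))

/-- Otherwise `w` fixes a vector lying on no reflecting hyperplane. -/
theorem exists_root_mem_movedSpace {w : W} (hw : w ≠ 1) :
    ∃ x ∈ rootSet cs, x ∈ movedSpace (geometricRep cs) w := by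
  by_contra! hcon
  have : Finite (rootSet cs) := Set.finite_range _
  obtain ⟨z, hwz, hz⟩ := Module.Dual.exists_forall_mem_ne_zero_of_forall_exists
    (LinearMap.eqLocus (geometricRep cs w) LinearMap.id)
    (fun x : rootSet cs => (titsForm M).flip x)
    fun x => exists_geometricRep_eq_self_of_notMem_movedSpace (hcon x x.2)
  obtain ⟨u, hu⟩ := exists_geometricRep_mem_chamber fun x hx => hz ⟨x, hx⟩
  have hfix : geometricRep cs (u * w * u⁻¹) (geometricRep cs u z) = geometricRep cs u z := by
    rw [geometricRep_mul, geometricRep_mul, Representation.inv_self_apply]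
    exact congrArg _ hwz
  exact hw (conj_eq_one_iff.1 (eq_one_of_geometricRep_eq_self hu hfix))

variable (cs) in
/-- The geometric representation of a finite Coxeter group as an orthogonal reflection
representation. -/
noncomputable def geometricReflectionRep : ReflectionRep cs (B → ℝ) where
  act := geometricRep cs
  Q := titsForm M
  Q_symm := titsForm_comm M
  Q_act := titsForm_geometricRep cs
  roots := rootSet cs
  finite_roots := Set.finite_range _
  neg_mem_roots _ := neg_mem_rootSet
  act_mem_roots w _ hx := geometricRep_mem_rootSet hx w
  Q_self _ := titsForm_self_of_mem_rootSet
  height := coordSum B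
  height_ne_zero _ := coordSum_ne_zero_of_mem_rootSet
  refl := rootReflection cs
  isReflection_refl _ hx := (rootReflection_spec hx).1
  act_refl _ hx := (rootReflection_spec hx).2
  exists_refl_eq _ := exists_rootReflection_eq
  exists_mem_movedSpace _ := exists_root_mem_movedSpace

end Roots

/-! ### The Euler form and the root order of a Coxeter element -/

section InversionRoots

variable [Fintype B] [DecidableEq B] (cs : CoxeterSystem M W) {l : List B} {i j : B}
  {x y z : B → ℝ}

lemma geometricRep_simple_apply_of_ne (h : j ≠ i) (y : B → ℝ) :
    geometricRep cs (cs.simple i) y j = y j := by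
  simp [geometricRep_simple, h]

lemma geometricRep_wordProd_apply_of_notMem (h : j ∉ l) (y : B → ℝ) :
    geometricRep cs (cs.wordProd l) y j = y j := by
  induction l with
  | nil => simp
  | cons a l ih =>
    rw [List.mem_cons, not_or] at h
    rw [cs.wordProd_cons, geometricRep_mul, geometricRep_simple_apply_of_ne cs h.1, ih h.2]

lemma geometricRep_wordProd_eq_self
    (h : ∀ i ∈ l, titsForm M z (simpleRoot i) = 0) : geometricRep cs (cs.wordProd l) z = z := by
  induction l with
  | nil => simp
  | cons a l ih =>
    rw [List.forall_mem_cons] at h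
    rw [cs.wordProd_cons, geometricRep_mul, ih h.2, geometricRep_simple, h.1]
    simp

variable {cs} in
lemma eq_simpleRoot_of_not_nonneg (hy : y ∈ rootSet cs) (h₀ : 0 ≤ y)
    (h : ¬ 0 ≤ geometricRep cs (cs.simple i) y) : y = simpleRoot i := by
  have hneg := (nonneg_or_nonpos_of_mem_rootSet (geometricRep_mem_rootSet hy _)).resolve_left h
  have hmul : y = y i • simpleRoot i := by
    ext j
    by_cases hj : j = i
    · simp [hj]
    · have hle := hneg j
      rw [geometricRep_simple_apply_of_ne cs hj] at hle
      simpa [hj] using le_antisymm hle (h₀ j)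
  have hsq : y i * y i = 1 := by
    have hself := titsForm_self_of_mem_rootSet hy
    rwa [hmul, map_smul, map_smul, LinearMap.smul_apply, titsForm_simpleRoot_self, smul_eq_mul,
      smul_eq_mul, mul_one] at hself
  have hi : 0 ≤ y i := h₀ i
  rw [hmul, show y i = 1 by nlinarith, one_smul]

/-- The root `s₁ ⋯ sₙ α` attached to position `n` of a word `l`, where `s₁, …, sₙ` are the letters
before this position and `α` is the simple root of the letter at it. For a reduced word these are
the positive roots made negative by the inverse of the product. -/
noncomputable def inversionRoot (l : List B) (n : Fin l.length) : B → ℝ :=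
  geometricRep cs (cs.wordProd (l.take n)) (simpleRoot l[n])

lemma inversionRoot_cons_zero (i : B) (l : List B) :
    inversionRoot cs (i :: l) (0 : Fin (l.length + 1)) = simpleRoot i := by
  simp [inversionRoot]

lemma inversionRoot_cons_succ (i : B) (l : List B) (n : Fin l.length) :
    inversionRoot cs (i :: l) n.succ = geometricRep cs (cs.simple i) (inversionRoot cs l n) := by
  simp [inversionRoot, cs.wordProd_cons]

variable {cs} in
lemma exists_inversionRoot_eq (hy : y ∈ rootSet cs) (h₀ : 0 ≤ y)
    (h : ¬ 0 ≤ geometricRep cs (cs.wordProd l)⁻¹ y) : ∃ n, inversionRoot cs l n = y := by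
  induction l generalizing y with
  | nil => exact absurd (by simpa using h₀) h
  | cons a l ih =>
    by_cases ha : 0 ≤ geometricRep cs (cs.simple a) y
    · rw [cs.wordProd_cons, mul_inv_rev, geometricRep_mul, cs.inv_simple] at h
      obtain ⟨n, hn⟩ := ih (geometricRep_mem_rootSet hy _) ha h
      refine ⟨n.succ, ?_⟩
      rw [inversionRoot_cons_succ, hn, ← geometricRep_mul, cs.simple_mul_simple_self]
      simp
    · exact ⟨(0 : Fin (l.length + 1)),
        (inversionRoot_cons_zero cs a l).trans (eq_simpleRoot_of_not_nonneg hy h₀ ha).symm⟩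

lemma inversionRoot_apply_eq_zero (hl : l.Nodup) {n k : Fin l.length} (h : n < k) :
    inversionRoot cs l n l[k] = 0 := by
  have hnotMem : l[k] ∉ l.take n := fun hmem => by
    obtain ⟨m, hm, heq⟩ := List.mem_take_iff_getElem.1 hmem
    have := (hl.getElem_inj_iff).1 heq
    omega
  have hne : l[k] ≠ l[n] := fun heq => h.ne' (Fin.ext ((hl.getElem_inj_iff).1 heq))
  rw [inversionRoot, geometricRep_wordProd_apply_of_notMem cs hnotMem]
  exact Pi.single_eq_of_ne hne _

/-- The vectors `ω` in question are the fundamental weights. -/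
lemma sub_geometricRep_wordProd_eq_inversionRoot (hl : l.Nodup) (n : Fin l.length) {ω : B → ℝ}
    (hω : ∀ y, titsForm M ω y = y l[n] / 2) :
    ω - geometricRep cs (cs.wordProd l) ω = inversionRoot cs l n := by
  induction l with
  | nil => exact n.elim0
  | cons a l ih =>
    rw [List.nodup_cons] at hl
    rw [cs.wordProd_cons, geometricRep_mul]
    cases n using Fin.cases with
    | zero =>
      have hfix : geometricRep cs (cs.wordProd l) ω = ω :=
        geometricRep_wordProd_eq_self cs fun i hi => by
          rw [hω]
          simp [show a ≠ i by rintro rfl; exact hl.1 hi]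
      rw [hfix, geometricRep_simple, hω, sub_sub_cancel]
      simp [inversionRoot]
    | succ n =>
      have hfix : geometricRep cs (cs.simple a) ω = ω := by
        have hne : l[(n : ℕ)] ≠ a := by rintro rfl; exact hl.1 (List.getElem_mem _)
        simp [geometricRep_simple, hω, hne]
      rw [inversionRoot_cons_succ, ← ih hl.2 n hω, map_sub, hfix]

lemma titsForm_simpleRoot_eq_zero (h : ∀ n, titsForm M z (inversionRoot cs l n) = 0) :
    ∀ i ∈ l, titsForm M z (simpleRoot i) = 0 := by
  induction l with
  | nil => simp
  | cons a l ih =>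
    have ha : titsForm M z (simpleRoot a) = 0 := by
      rw [← inversionRoot_cons_zero cs a l]
      exact h (0 : Fin (l.length + 1))
    have hz : geometricRep cs (cs.simple a)⁻¹ z = z := by
      rw [cs.inv_simple, geometricRep_simple, ha]
      simp
    refine List.forall_mem_cons.2 ⟨ha, ih fun n => ?_⟩
    rw [← h n.succ, inversionRoot_cons_succ, titsForm_comm M z (geometricRep _ _ _),
      titsForm_geometricRep_left, hz, titsForm_comm]

end InversionRoots

section CoxeterElement

variable [Fintype B] [DecidableEq B] {cs : CoxeterSystem M W} {l : List B} {x y z : B → ℝ}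

variable (cs l x) in
/-- The orbit of `x` under the inverse of the product `γ` of the word `l` consists of nonnegative
vectors up to its `k`-th point, which is the inversion root at position `n` of `l`. -/
structure IsOrbitPosition (k n : ℕ) : Prop where
  nonneg : ∀ m ≤ k, 0 ≤ geometricRep cs ((cs.wordProd l)⁻¹ ^ m) x
  exists_eq : ∃ h : n < l.length,
    geometricRep cs ((cs.wordProd l)⁻¹ ^ k) x = inversionRoot cs l ⟨n, h⟩

lemma IsOrbitPosition.eq {k n : ℕ} (hx : IsOrbitPosition cs l x k n)
    (hy : IsOrbitPosition cs l y k n) : x = y := by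
  obtain ⟨_, hx⟩ := hx.exists_eq
  obtain ⟨_, hy⟩ := hy.exists_eq
  exact (Representation.apply_bijective _ _).injective (hx.trans hy.symm)

variable [Finite W]

variable (cs) in
include cs in
lemma exists_weight (i : B) : ∃ ω, ∀ y, titsForm M ω y = y i / 2 := by
  obtain ⟨ω, hω⟩ := exists_titsForm_eq cs ((2 : ℝ)⁻¹ • LinearMap.proj i)
  refine ⟨ω, fun y => ?_⟩
  rw [hω, LinearMap.smul_apply, LinearMap.proj_apply, smul_eq_mul, div_eq_inv_mul]

/-- A vector fixed by `γ` is orthogonal to the image of `1 - γ`, which contains all inversion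
roots. -/
lemma eq_zero_of_geometricRep_wordProd_eq_self (hl : l.Nodup) (hmem : ∀ i, i ∈ l)
    (hz : geometricRep cs (cs.wordProd l) z = z) : z = 0 := by
  have horth : ∀ n, titsForm M z (inversionRoot cs l n) = 0 := fun n => by
    obtain ⟨ω, hω⟩ := exists_weight cs l[n]
    have h := titsForm_geometricRep cs (cs.wordProd l) z ω
    rw [hz] at h
    rw [← sub_geometricRep_wordProd_eq_inversionRoot cs hl n hω, map_sub, h, sub_self]
  refine eq_zero_of_titsForm_eq_zero cs fun y => ?_
  rw [eq_sum_smul_simpleRoot y, map_sum]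
  refine Finset.sum_eq_zero fun i _ => ?_
  rw [map_smul, titsForm_simpleRoot_eq_zero cs horth i (hmem i), smul_zero]

lemma injective_one_sub_geometricRep_wordProd (hl : l.Nodup) (hmem : ∀ i, i ∈ l) :
    Function.Injective (1 - geometricRep cs (cs.wordProd l) : Module.End ℝ (B → ℝ)) := by
  refine (injective_iff_map_eq_zero _).2 fun z hz => ?_
  exact eq_zero_of_geometricRep_wordProd_eq_self hl hmem (sub_eq_zero.1 hz).symm

variable (cs) in
/-- The Euler form of a product of all simple reflections in the geometric representation. -/
noncomputable def coxeterEulerForm (hl : l.Nodup) (hmem : ∀ i, i ∈ l) :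
    EulerForm (geometricReflectionRep cs) (cs.wordProd l) :=
  let e := LinearEquiv.ofInjectiveEndo (1 - geometricRep cs (cs.wordProd l))
    (injective_one_sub_geometricRep_wordProd hl hmem)
  { E := titsForm M ∘ₗ e.symm.toLinearMap
    E_sub_act := fun z y => congr(titsForm M $(e.symm_apply_apply z) y)
    mem_mov := fun x => mem_movedSpace.2 (e.surjective x) }

lemma coxeterEulerForm_inversionRoot (hl : l.Nodup) (hmem : ∀ i, i ∈ l) (n : Fin l.length)
    (y : B → ℝ) : (coxeterEulerForm cs hl hmem).E (inversionRoot cs l n) y = y l[n] / 2 := by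
  obtain ⟨ω, hω⟩ := exists_weight cs l[n]
  rw [← sub_geometricRep_wordProd_eq_inversionRoot cs hl n hω, ← hω]
  exact (coxeterEulerForm cs hl hmem).E_sub_act ω y

/-- The sum over the orbit of a root under `γ⁻¹` is fixed by `γ⁻¹`, hence zero, so the orbit cannot
consist of nonnegative vectors. -/
lemma exists_not_nonneg_inv_pow (hl : l.Nodup) (hmem : ∀ i, i ∈ l) (hx : x ≠ 0) :
    ∃ k, ¬ 0 ≤ geometricRep cs ((cs.wordProd l)⁻¹ ^ k) x := by
  by_contra! hnonneg
  set γ := cs.wordProd l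
  set s := ∑ m ∈ Finset.range (orderOf γ⁻¹), geometricRep cs (γ⁻¹ ^ m) x with hs
  have hfix : geometricRep cs γ⁻¹ s = s := by
    have h := Finset.sum_range_succ (fun m => geometricRep cs (γ⁻¹ ^ m) x) (orderOf γ⁻¹)
    rw [Finset.sum_range_succ', pow_orderOf_eq_one, pow_zero] at h
    rw [hs, map_sum]
    simpa only [← geometricRep_mul, ← pow_succ'] using add_right_cancel h
  have hzero : s = 0 := by
    refine eq_zero_of_geometricRep_wordProd_eq_self (cs := cs) hl hmem ?_
    conv_lhs => rw [← hfix]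
    exact (geometricRep cs).self_inv_apply γ s
  have hpos : 0 < coordSum B s := by
    rw [hs, map_sum]
    refine Finset.sum_pos (fun m _ => coordSum_pos (hnonneg m) fun h => hx ?_)
      ⟨0, Finset.mem_range.2 (orderOf_pos _)⟩
    exact (map_eq_zero_iff _ (Representation.apply_bijective _ _).injective).1 h
  exact hpos.ne' (by rw [hzero, map_zero])

lemma exists_isOrbitPosition (hl : l.Nodup) (hmem : ∀ i, i ∈ l) (hx : x ∈ rootSet cs)
    (h₀ : 0 ≤ x) : ∃ k n, IsOrbitPosition cs l x k n := by
  classical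
  have hex := exists_not_nonneg_inv_pow (cs := cs) hl hmem (ne_zero_of_mem_rootSet hx)
  obtain ⟨k, hk⟩ : ∃ k, Nat.find hex = k + 1 :=
    Nat.exists_eq_succ_of_ne_zero fun h => (Nat.find_eq_zero hex).1 h (by simpa using h₀)
  have hnonneg : ∀ m ≤ k, 0 ≤ geometricRep cs ((cs.wordProd l)⁻¹ ^ m) x := fun m hm =>
    not_not.1 (Nat.find_min hex (by omega))
  have hneg := Nat.find_spec hex
  rw [hk, pow_succ', geometricRep_mul] at hneg
  obtain ⟨n, hn⟩ := exists_inversionRoot_eq (geometricRep_mem_rootSet hx _) (hnonneg k le_rfl) hneg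
  exact ⟨k, n, hnonneg, n.2, hn.symm⟩

namespace IsOrbitPosition

variable {k k' n n' : ℕ}

lemma exists_E_eq (hl : l.Nodup) (hmem : ∀ i, i ∈ l) (hx : IsOrbitPosition cs l x k n)
    (y : B → ℝ) : ∃ h : n < l.length, (coxeterEulerForm cs hl hmem).E x y =
      geometricRep cs ((cs.wordProd l)⁻¹ ^ k) y l[n] / 2 := by
  obtain ⟨hn, hx⟩ := hx.exists_eq
  refine ⟨hn, ?_⟩
  have hcomm : Commute ((cs.wordProd l)⁻¹ ^ k) (cs.wordProd l) :=
    (Commute.refl _).inv_left.pow_left k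
  rw [← (coxeterEulerForm cs hl hmem).E_act_act_of_commute hcomm]
  exact congr((coxeterEulerForm cs hl hmem).E $hx _).trans
    (coxeterEulerForm_inversionRoot hl hmem ⟨n, hn⟩ _)

lemma E_nonneg (hl : l.Nodup) (hmem : ∀ i, i ∈ l) (hx : IsOrbitPosition cs l x k n)
    (hy : IsOrbitPosition cs l y k' n') (h : k ≤ k') : 0 ≤ (coxeterEulerForm cs hl hmem).E x y := by
  obtain ⟨_, hE⟩ := exists_E_eq hl hmem hx y
  rw [hE]
  exact div_nonneg (hy.nonneg k h _) two_pos.le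

lemma E_nonpos_of_lt (hl : l.Nodup) (hmem : ∀ i, i ∈ l) (hx : IsOrbitPosition cs l x k n)
    (hy : IsOrbitPosition cs l y k' n') (h : k < k') : (coxeterEulerForm cs hl hmem).E y x ≤ 0 := by
  let F := coxeterEulerForm cs hl hmem
  obtain ⟨_, hE⟩ := exists_E_eq hl hmem hx (geometricRep cs (cs.wordProd l)⁻¹ y)
  have hserre := F.E_act (rle_refl _) (F.mem_mov (geometricRep cs (cs.wordProd l)⁻¹ y))
    (F.mem_mov x)
  rw [← geometricRep_mul, ← pow_succ] at hE
  rw [← (geometricRep cs).self_inv_apply (cs.wordProd l) y]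
  refine hserre.trans_le (neg_nonpos.2 ?_)
  exact hE ▸ div_nonneg (hy.nonneg (k + 1) h _) two_pos.le

lemma E_eq_zero_of_lt (hl : l.Nodup) (hmem : ∀ i, i ∈ l) (hx : IsOrbitPosition cs l x k n)
    (hy : IsOrbitPosition cs l y k n') (h : n < n') : (coxeterEulerForm cs hl hmem).E y x = 0 := by
  obtain ⟨hn', hE⟩ := exists_E_eq hl hmem hy x
  obtain ⟨hn, hx⟩ := hx.exists_eq
  rw [hE, hx, div_eq_zero_iff]
  exact .inl (inversionRoot_apply_eq_zero cs hl (k := ⟨n', hn'⟩) h)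

end IsOrbitPosition

variable (cs l) in
/-- The pair `(k, n)` of `IsOrbitPosition` for a positive root (its values at other vectors are
irrelevant). -/
noncomputable def orbitPosition (x : B → ℝ) : ℕ ×ₗ ℕ :=
  Classical.epsilon fun p => IsOrbitPosition cs l x (ofLex p).1 (ofLex p).2

lemma isOrbitPosition_orbitPosition (hl : l.Nodup) (hmem : ∀ i, i ∈ l)
    (hx : (geometricReflectionRep cs).Pos x) :
    IsOrbitPosition cs l x (ofLex (orbitPosition cs l x)).1 (ofLex (orbitPosition cs l x)).2 := by
  obtain ⟨k, n, h⟩ := exists_isOrbitPosition hl hmem hx.1 (nonneg_of_coordSum_pos hx.1 hx.2)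
  exact Classical.epsilon_spec
    (p := fun p : ℕ ×ₗ ℕ => IsOrbitPosition cs l x (ofLex p).1 (ofLex p).2) ⟨toLex (k, n), h⟩

variable (cs) in
/-- The positive roots ordered lexicographically by `orbitPosition`. -/
noncomputable def coxeterOrderedEulerForm (hl : l.Nodup) (hmem : ∀ i, i ∈ l) :
    OrderedEulerForm (geometricReflectionRep cs) (cs.wordProd l) (ℕ ×ₗ ℕ) where
  toEulerForm := coxeterEulerForm cs hl hmem
  key := orbitPosition cs l
  key_inj x y hx hy h := by
    have hx := isOrbitPosition_orbitPosition hl hmem hx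
    rw [h] at hx
    exact hx.eq (isOrbitPosition_orbitPosition hl hmem hy)
  E_nonneg_of_key_lt x y hx hy h :=
    (isOrbitPosition_orbitPosition hl hmem hx).E_nonneg hl hmem
      (isOrbitPosition_orbitPosition hl hmem hy)
      ((Prod.Lex.lt_iff.1 h).elim le_of_lt fun h => h.1.le)
  E_nonpos_of_key_lt x y hx hy h := by
    have hx := isOrbitPosition_orbitPosition hl hmem hx
    have hy := isOrbitPosition_orbitPosition hl hmem hy
    rcases Prod.Lex.lt_iff.1 h with hlt | ⟨heq, hlt⟩
    · exact hx.E_nonpos_of_lt hl hmem hy hlt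
    · exact (hx.E_eq_zero_of_lt hl hmem (heq ▸ hy) hlt).le

end CoxeterElement

end BradyWatt

open BradyWatt in
/-- Brady–Watt: for a finite Coxeter group `W` with the reflection order and a
Coxeter element `γ`, the interval `[1,γ]` is a lattice: every pair of elements has a
meet and a join within the interval. -/
theorem interval_isLattice [Fintype B] [Fintype W] (cs : CoxeterSystem M W) (γ : W)
    (hγ : IsCoxeterElement cs γ) (u w : W) (hu : rle cs u γ) (hw : rle cs w γ) :
    (∃ m : W, IsIntervalGLB cs γ {u, w} m) ∧ (∃ j : W, IsIntervalLUB cs γ {u, w} j) := by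
  classical
  obtain ⟨v, l, hl, hmem, rfl⟩ := hγ
  have hglb : ∀ x y, rle cs x (v * cs.wordProd l * v⁻¹) → rle cs y (v * cs.wordProd l * v⁻¹) →
      ∃ m, IsIntervalGLB cs (v * cs.wordProd l * v⁻¹) {x, y} m := by
    intro x y hx hy
    obtain ⟨x, rfl⟩ := (MulAut.conj v).surjective x
    obtain ⟨y, rfl⟩ := (MulAut.conj v).surjective y
    obtain ⟨m, hm⟩ := (coxeterOrderedEulerForm cs hl hmem).exists_isIntervalGLB
      ((rle_conj_iff v).1 hx) ((rle_conj_iff v).1 hy)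
    exact ⟨v * m * v⁻¹, Set.image_pair (MulAut.conj v) x y ▸ isIntervalGLB_conj hm v⟩
  exact ⟨hglb u w hu hw, exists_isIntervalLUB hglb (by simp [hu, hw])⟩
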